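/- arXiv:1810.07956 — 4 statements merged into one kernel-verified Lean document; each statement's English description precedes it below -/
import Mathlib

section
/- For all n ≥ 0, E_{2n+3} = (-1)^n · 2 · A'_{2n+2}(-1), where A'_n denotes the derivative of the Eulerian polynomial A_n(q) and E_m is the number of alternating permutations of [m]. -/
open Finset

/-- The set of (0-based) descent indices of a permutation of `Fin n`:
`i` is a descent index if `π i > π (i+1)` (so the 1-based descent position is `i+1`). -/
def descentSet {n : ℕ} (π : Equiv.Perm (Fin n)) : Finset ℕ :=
  (Finset.range n).filter
    (fun i => ∃ h : i + 1 < n, π ⟨i + 1, h⟩ < π ⟨i, Nat.lt_of_succ_lt h⟩)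

/-- The number of descents of `π`. -/
def des {n : ℕ} (π : Equiv.Perm (Fin n)) : ℕ := (descentSet π).card

/-- The number of descents of `π` at odd (1-based) positions, i.e. even 0-based indices. -/
def odes {n : ℕ} (π : Equiv.Perm (Fin n)) : ℕ :=
  ((descentSet π).filter (fun i => Even i)).card

/-- The number of descents of `π` at even (1-based) positions, i.e. odd 0-based indices. -/
def edes {n : ℕ} (π : Equiv.Perm (Fin n)) : ℕ :=
  ((descentSet π).filter (fun i => Odd i)).card

/-- The refined Eulerian polynomial `A_n(p,q) = Σ_π p^{odes π} q^{edes π}`. -/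
def refinedEulerian (n : ℕ) (p q : ℝ) : ℝ :=
  ∑ π : Equiv.Perm (Fin n), p ^ odes π * q ^ edes π

/-- The Eulerian polynomial `A_n(q) = Σ_π q^{des π}` as a function. -/
def eulerianEval (n : ℕ) (q : ℝ) : ℝ :=
  ∑ π : Equiv.Perm (Fin n), q ^ des π

/-- The Eulerian polynomial `A_n(q)` as a polynomial. -/
noncomputable def eulerianPolynomial (n : ℕ) : Polynomial ℝ :=
  ∑ π : Equiv.Perm (Fin n), Polynomial.X ^ des π

/-- The Eulerian number `A_{n,k}`: the number of permutations of `[n]` with `k` descents. -/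
def eulerianNumber (n k : ℕ) : ℕ :=
  (Finset.univ.filter (fun π : Equiv.Perm (Fin n) => des π = k)).card

/-- A permutation `a_1 a_2 … a_n` is alternating if `a_1 > a_2 < a_3 > ⋯`. -/
def IsAlternating {n : ℕ} (π : Equiv.Perm (Fin n)) : Prop :=
  ∀ i : ℕ, ∀ h : i + 1 < n,
    (π ⟨i + 1, h⟩ < π ⟨i, Nat.lt_of_succ_lt h⟩ ↔ Even i)

open scoped Classical in
/-- The Euler number `E_n`: the number of alternating permutations of `[n]`. -/
noncomputable def eulerNumber (n : ℕ) : ℕ :=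
  (Finset.univ.filter (fun π : Equiv.Perm (Fin n) => IsAlternating π)).card

/-- `a_{n,k}`: the number of permutations of `[n]` with `k` even descents and no odd descents. -/
def aNum (n k : ℕ) : ℕ :=
  (Finset.univ.filter (fun π : Equiv.Perm (Fin n) => edes π = k ∧ odes π = 0)).card

/-!
Build permutations by inserting a new smallest letter into a word of length `n ≥ 1` in all
`n + 1` possible ways.  The number of descents stays `d` for `d + 1` of the positions and becomes
`d + 1` for the others, which is the Eulerian recurrence
`A_{n+1} = (1 + n q) A_n + q (1 - q) A_n'`.  The number of valleys stays `v` for the two ends and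
the two neighbours of each valley and becomes `v + 1` for the `n - 1 - 2 v` other positions, so
`∑_π q ^ v(π) * ((1 + q) / 2) ^ (n - 1 - 2 v(π))` obeys the same recurrence and equals `A_n(q)`.
At `q = -1` only the permutations with `2 v + 1 = n`, that is the alternating ones of odd length,
survive: `A_{2m}(-1) = 0` for `m ≥ 1`, and `A_{2m+1}(-1) = (-1)^m E_{2m+1}`.  The theorem is the
recurrence for `n = 2 m` evaluated at `q = -1`.
-/

open Polynomial

section Insertion

variable {α M N R : Type*}

theorem sum_map_permutations'_cons [AddCommMonoid M] [AddCommMonoid N] (φ : M →+ N)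
    {f : List α → N} {g : List α → M} {m : α} {s : List α}
    (h : ∀ l, l.Perm s → ((l.permutations'Aux m).map f).sum = φ (g l)) :
    ((m :: s).permutations'.map f).sum = φ (s.permutations'.map g).sum := by
  rw [List.permutations', List.flatMap_def, List.map_flatten, List.sum_flatten, map_list_sum,
    List.map_map, List.map_map, List.map_map]
  exact congrArg List.sum (List.map_congr_left fun l hl => h l (List.mem_permutations'.1 hl))

theorem sum_perm_ofFn [AddCommMonoid M] {n : ℕ} (f : List (Fin n) → M) :
    ∑ π : Equiv.Perm (Fin n), f (List.ofFn π) = ((List.finRange n).permutations'.map f).sum := by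
  have hinj : Function.Injective fun π : Equiv.Perm (Fin n) => List.ofFn π :=
    List.ofFn_injective.comp DFunLike.coe_injective
  have himage : univ.image (fun π : Equiv.Perm (Fin n) => List.ofFn π) =
      (List.finRange n).permutations'.toFinset := by
    refine Finset.eq_of_subset_of_card_le (fun l hl => ?_) ?_
    · obtain ⟨π, -, rfl⟩ := Finset.mem_image.1 hl
      simpa [List.ofFn_id] using π.ofFn_comp_perm id
    · calc _ ≤ (List.finRange n).permutations'.length := List.toFinset_card_le _
        _ = _ := by
          rw [← (List.permutations_perm_permutations' _).length_eq, List.length_permutations,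
            List.length_finRange, Finset.card_image_of_injective _ hinj, Finset.card_univ,
            Fintype.card_perm, Fintype.card_fin]
  rw [← List.sum_toFinset, ← himage, Finset.sum_image hinj.injOn]
  exact (List.permutations_perm_permutations' _).nodup_iff.1
    (List.nodup_permutations _ (List.nodup_finRange n))

variable [LinearOrder α] [CommRing R]

/-- The number of descents of a word. -/
def listDescents : List α → ℕ
  | a :: b :: l => (if b < a then 1 else 0) + listDescents (b :: l)
  | _ => 0

/-- The number of valleys `a > b ≤ c` of three consecutive letters of a word. Allowing `b = c`
makes them exactly the descents that are followed by a non-descent. -/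
def listValleys : List α → ℕ
  | a :: b :: c :: l => (if b < a ∧ b ≤ c then 1 else 0) + listValleys (b :: c :: l)
  | _ => 0

theorem listDescents_map {β : Type*} [LinearOrder β] {f : α → β} (hf : StrictMono f) :
    ∀ l : List α, listDescents (l.map f) = listDescents l
  | [] => rfl
  | [_] => rfl
  | a :: b :: l => by
    simpa [listDescents, hf.lt_iff_lt] using listDescents_map hf (b :: l)

theorem listValleys_cons_cons_of_le {a b : α} (h : a ≤ b) (l : List α) :
    listValleys (a :: b :: l) = listValleys (b :: l) := by
  cases l <;> simp [listValleys, h.not_gt]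

theorem listValleys_cons_cons_cons_of_lt_of_le {a b c : α} (hab : b < a) (hbc : b ≤ c)
    (l : List α) : listValleys (a :: b :: c :: l) = 1 + listValleys (c :: l) := by
  rw [listValleys, if_pos ⟨hab, hbc⟩, listValleys_cons_cons_of_le hbc]

theorem listValleys_cons_cons_cons_of_not {a b c : α} (h : ¬(b < a ∧ b ≤ c)) (l : List α) :
    listValleys (a :: b :: c :: l) = listValleys (b :: c :: l) := by
  rw [listValleys, if_neg h, zero_add]

theorem two_mul_listValleys_lt_length :
    ∀ {l : List α}, l ≠ [] → 2 * listValleys l < l.length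
  | [_], _ => by simp [listValleys]
  | [_, _], _ => by simp [listValleys]
  | a :: b :: c :: l, _ => by
    have hc := two_mul_listValleys_lt_length (List.cons_ne_nil c l)
    have hbc := two_mul_listValleys_lt_length (List.cons_ne_nil b (c :: l))
    simp only [List.length_cons] at hc hbc ⊢
    by_cases h : b < a ∧ b ≤ c
    · rw [listValleys_cons_cons_cons_of_lt_of_le h.1 h.2]
      lia
    · rw [listValleys_cons_cons_cons_of_not h]
      lia

theorem sum_permutations'Aux_listDescents_cons_cons [AddCommMonoid M] {m a b : α}
    (hma : m < a) (hmb : m < b) (l : List α) (f : ℕ → M) :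
    (((a :: b :: l).permutations'Aux m).map fun l' => f (listDescents l')).sum =
      f (listDescents (b :: l) + 1) + (((b :: l).permutations'Aux m).map fun l' =>
        f ((if b < a then 1 else 0) + listDescents l')).sum := by
  simp only [List.permutations'Aux, List.map_cons, List.map_map, List.sum_cons,
    Function.comp_def, listDescents, hma, hma.not_gt, hmb.not_gt, if_true, if_false, zero_add,
    add_comm 1]
  abel

theorem sum_permutations'Aux_listDescents {m : α} {l : List α} (hl : ∀ a ∈ l, m < a)
    (f : ℕ → R) :
    ((l.permutations'Aux m).map fun l' => f (listDescents l')).sum =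
      (listDescents l + 1) * f (listDescents l) +
        (l.length - listDescents l) * f (listDescents l + 1) := by
  induction l generalizing f with
  | nil => simp [listDescents]
  | cons a l ih =>
    obtain ⟨hma, hml⟩ := List.forall_mem_cons.1 hl
    cases l with
    | nil => simp [listDescents, hma, hma.not_gt]
    | cons b l =>
      rw [sum_permutations'Aux_listDescents_cons_cons hma (hml b List.mem_cons_self),
        ih hml fun k => f (_ + k), listDescents]
      split_ifs <;> simp only [zero_add, add_comm 1, List.length_cons] <;> push_cast <;> ring

/-- The letter `a` affects the number of valleys only where `m` is inserted next to `b`. The second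
summand on the left is the term of the sum on the right for the insertion of `m` just after `b`. -/
theorem sum_permutations'Aux_listValleys_cons_cons_cons [AddCommMonoid M] {m a b c : α}
    (hma : m < a) (hmb : m < b) (hmc : m < c) (l : List α) (f : ℕ → M) :
    (((a :: b :: c :: l).permutations'Aux m).map fun l' => f (listValleys l')).sum +
        f ((if b < a ∧ b ≤ c then 1 else 0) + (listValleys (c :: l) + 1)) =
      f (listValleys (b :: c :: l) + 1) + f (listValleys (c :: l) + 1) +
        (((b :: c :: l).permutations'Aux m).map fun l' =>
          f ((if b < a ∧ b ≤ c then 1 else 0) + listValleys l')).sum := by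
  simp only [List.permutations'Aux, List.map_cons, List.map_map, List.sum_cons,
    Function.comp_def, listValleys_cons_cons_of_le, listValleys, hma, hmb, hmb.le, hmc.le,
    hma.not_gt, hmb.not_gt, hmb.not_ge, false_and, and_false, if_true, if_false, and_self,
    zero_add, add_comm 1]
  abel

theorem sum_permutations'Aux_listValleys {m : α} {l : List α} (hl : ∀ a ∈ l, m < a)
    (hne : l ≠ []) (f : ℕ → R) :
    ((l.permutations'Aux m).map fun l' => f (listValleys l')).sum =
      (2 * listValleys l + 2) * f (listValleys l) +
        (l.length - 1 - 2 * listValleys l) * f (listValleys l + 1) := by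
  induction l generalizing f with
  | nil => exact absurd rfl hne
  | cons a l ih =>
    obtain ⟨hma, hml⟩ := List.forall_mem_cons.1 hl
    rcases l with _ | ⟨b, _ | ⟨c, l⟩⟩
    · simp [listValleys, two_mul]
    · have hmb : m < b := hml b List.mem_cons_self
      simp only [List.permutations'Aux, List.map_cons, List.map_nil, List.sum_cons, List.sum_nil,
        listValleys, hma, hma.not_gt, hmb.le, hmb.not_ge, and_self, and_false, false_and, if_true,
        if_false, List.length_cons, List.length_nil]
      push_cast
      ring
    · have recurrence := sum_permutations'Aux_listValleys_cons_cons_cons hma (hml b (by simp))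
        (hml c (by simp)) l f
      rw [ih hml (List.cons_ne_nil _ _) fun k => f (_ + k)] at recurrence
      by_cases h : b < a ∧ b ≤ c
      · rw [if_pos h, listValleys_cons_cons_of_le h.2] at recurrence
        rw [listValleys_cons_cons_cons_of_lt_of_le h.1 h.2]
        simp only [add_comm 1, List.length_cons] at recurrence ⊢
        push_cast at recurrence ⊢
        linear_combination recurrence
      · rw [if_neg h] at recurrence
        rw [listValleys_cons_cons_cons_of_not h]
        simp only [zero_add, List.length_cons] at recurrence ⊢
        push_cast at recurrence ⊢
        linear_combination recurrence

end Insertion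

section Recurrence

variable {α R K : Type*} [CommRing R] [Field K]

/-- The linear operator `p ↦ (1 + n q) p + q (1 - q) p'`, which takes the `n`-th Eulerian
polynomial to the next one. -/
noncomputable def eulerianOperator (R : Type*) [CommRing R] (n : ℕ) : R[X] →ₗ[R] R[X] :=
  LinearMap.mulLeft R (1 + (n : R[X]) * X) + LinearMap.mulLeft R (X * (1 - X)) ∘ₗ derivative

theorem eulerianOperator_apply (n : ℕ) (p : R[X]) :
    eulerianOperator R n p = (1 + (n : R[X]) * X) * p + X * (1 - X) * derivative p := rfl

theorem X_mul_derivative_X_pow (d : ℕ) : X * derivative (X ^ d : R[X]) = (d : R[X]) * X ^ d := by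
  cases d with
  | zero => simp
  | succ d =>
    rw [derivative_X_pow, C_eq_natCast, Nat.add_sub_cancel]
    ring

theorem eulerianOperator_X_pow (n d : ℕ) :
    eulerianOperator R n (X ^ d) =
      (d + 1 : R[X]) * X ^ d + (n - d : R[X]) * X ^ (d + 1) := by
  rw [eulerianOperator_apply]
  linear_combination (1 - X) * X_mul_derivative_X_pow (R := R) d

/-- The total weight `q ^ v * ((1 + q) / 2) ^ (n - 1 - 2 v)` that a permutation of `[n]` with
`v` valleys contributes to the Eulerian polynomial. It is only meaningful for `2 * v < n`, where
the subtractions do not truncate. -/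
noncomputable def valleyWeight (K : Type*) [Field K] (n v : ℕ) : K[X] :=
  X ^ v * (C 2⁻¹ * (1 + X)) ^ (n - 1 - 2 * v)

theorem eulerianOperator_valleyWeight [NeZero (2 : K)] {n v : ℕ} (h : 2 * v < n) :
    eulerianOperator K n (valleyWeight K n v) =
      (2 * v + 2 : K[X]) * valleyWeight K (n + 1) v +
        (n - 1 - 2 * v : K[X]) * valleyWeight K (n + 1) (v + 1) := by
  obtain ⟨r, rfl⟩ := Nat.exists_eq_add_of_lt h
  have two_mul_half : 2 * C (2⁻¹ : K) = 1 := by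
    rw [← C_ofNat, ← C_mul, mul_inv_cancel₀ two_ne_zero, C_1]
  have derivative_base_pow : derivative ((C (2⁻¹ : K) * (1 + X)) ^ r) =
      (r : K[X]) * (C 2⁻¹ * (1 + X)) ^ (r - 1) * C 2⁻¹ := by
    simp [derivative_pow]
  have exponent : 2 * v + r + 1 - 1 - 2 * v = r := by lia
  have exponent_same : 2 * v + r + 1 + 1 - 1 - 2 * v = r + 1 := by lia
  have exponent_succ : 2 * v + r + 1 + 1 - 1 - 2 * (v + 1) = r - 1 := by lia
  rw [eulerianOperator_apply, valleyWeight, valleyWeight, valleyWeight, exponent, exponent_same,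
    exponent_succ, derivative_mul, derivative_base_pow]
  have hX := X_mul_derivative_X_pow (R := K) v
  push_cast
  cases r with
  | zero =>
    simp only [pow_zero, Nat.cast_zero]
    linear_combination (1 - X) * hX - (v + 1) * X ^ v * (1 + X) * two_mul_half
  | succ k =>
    simp only [Nat.add_sub_cancel]
    push_cast
    linear_combination (1 - X) * (C 2⁻¹ * (1 + X)) ^ (k + 1) * hX +
      ((k + 1) * X ^ (v + 1) * (C 2⁻¹ * (1 + X)) ^ k -
        (v + 1) * X ^ v * (1 + X) * (C 2⁻¹ * (1 + X)) ^ (k + 1)) * two_mul_half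

variable [LinearOrder α]

theorem sum_X_pow_listDescents_cons {m : α} {s : List α} (hs : ∀ a ∈ s, m < a) :
    ((m :: s).permutations'.map fun l => (X : R[X]) ^ listDescents l).sum =
      eulerianOperator R s.length
        (s.permutations'.map fun l => (X : R[X]) ^ listDescents l).sum := by
  refine sum_map_permutations'_cons (eulerianOperator R s.length).toAddMonoidHom fun l hl => ?_
  have hml : ∀ a ∈ l, m < a := fun a ha => hs a (hl.mem_iff.1 ha)
  rw [sum_permutations'Aux_listDescents hml fun d => (X : R[X]) ^ d, hl.length_eq]
  exact (eulerianOperator_X_pow _ _).symm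

theorem sum_valleyWeight_listValleys_cons [NeZero (2 : K)] {m : α} {s : List α}
    (hs : ∀ a ∈ s, m < a) (hne : s ≠ []) :
    ((m :: s).permutations'.map fun l => valleyWeight K (m :: s).length (listValleys l)).sum =
      eulerianOperator K s.length
        (s.permutations'.map fun l => valleyWeight K s.length (listValleys l)).sum := by
  refine sum_map_permutations'_cons (eulerianOperator K s.length).toAddMonoidHom fun l hl => ?_
  have hml : ∀ a ∈ l, m < a := fun a ha => hs a (hl.mem_iff.1 ha)
  have hl_ne : l ≠ [] := fun h => hne (h ▸ hl).nil_eq.symm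
  have hlt : 2 * listValleys l < s.length := hl.length_eq ▸ two_mul_listValleys_lt_length hl_ne
  rw [sum_permutations'Aux_listValleys hml hl_ne (valleyWeight K (m :: s).length), hl.length_eq]
  exact (eulerianOperator_valleyWeight hlt).symm

theorem sum_X_pow_listDescents_eq_sum_valleyWeight [NeZero (2 : K)] {s : List α}
    (hs : s.Pairwise (· < ·)) (hne : s ≠ []) :
    (s.permutations'.map fun l => (X : K[X]) ^ listDescents l).sum =
      (s.permutations'.map fun l => valleyWeight K s.length (listValleys l)).sum := by
  induction s with
  | nil => exact absurd rfl hne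
  | cons m s ih =>
    obtain ⟨hm, hs⟩ := List.pairwise_cons.1 hs
    rcases eq_or_ne s [] with rfl | hne
    · simp [listDescents, listValleys, valleyWeight]
    · rw [sum_X_pow_listDescents_cons hm, sum_valleyWeight_listValleys_cons hm hne, ih hs hne]

end Recurrence

section Permutations

theorem listDescents_eq_card {α : Type*} [LinearOrder α] :
    ∀ l : List α, listDescents l = ((Finset.range l.length).filter
      (fun i => ∃ h : i + 1 < l.length, l[i + 1] < l[i])).card
  | [] => rfl
  | [_] => by simp [listDescents]
  | a :: b :: l => by
    rw [listDescents, listDescents_eq_card (b :: l), Finset.card_filter, Finset.card_filter]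
    refine Eq.trans ?_ (Finset.sum_range_succ' _ (b :: l).length).symm
    simp [add_comm (ite _ _ _)]

theorem des_eq_listDescents {n : ℕ} (π : Equiv.Perm (Fin n)) :
    des π = listDescents (List.ofFn π) := by
  simp [listDescents_eq_card, des, descentSet]

theorem eulerianPolynomial_eq_sum_permutations' (n : ℕ) :
    eulerianPolynomial n =
      ((List.finRange n).permutations'.map fun l => (X : ℝ[X]) ^ listDescents l).sum := by
  simp_rw [eulerianPolynomial, des_eq_listDescents]
  exact sum_perm_ofFn fun l => (X : ℝ[X]) ^ listDescents l

theorem eulerianPolynomial_succ (n : ℕ) :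
    eulerianPolynomial (n + 1) = eulerianOperator ℝ n (eulerianPolynomial n) := by
  rw [eulerianPolynomial_eq_sum_permutations', eulerianPolynomial_eq_sum_permutations',
    List.finRange_succ, sum_X_pow_listDescents_cons (by simp [Fin.pos_iff_ne_zero]),
    ← List.map_permutations']
  simp [Function.comp_def, listDescents_map Fin.strictMono_succ]

theorem eulerianPolynomial_eq_sum_valleyWeight {n : ℕ} (hn : n ≠ 0) :
    eulerianPolynomial n =
      ∑ π : Equiv.Perm (Fin n), valleyWeight ℝ n (listValleys (List.ofFn π)) := by
  rw [eulerianPolynomial_eq_sum_permutations', sum_X_pow_listDescents_eq_sum_valleyWeight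
    (List.pairwise_lt_finRange n) (by simpa using hn), List.length_finRange]
  exact (sum_perm_ofFn fun l => valleyWeight ℝ n (listValleys l)).symm

/-- A word `a₁ > a₂ ≤ a₃ > ⋯` of any length; on the word of a permutation it is
`IsAlternating`. -/
def ListAlternating {α : Type*} [LinearOrder α] (l : List α) : Prop :=
  ∀ i, ∀ h : i + 1 < l.length, l[i + 1] < l[i] ↔ Even i

theorem listAlternating_cons_cons_cons {α : Type*} [LinearOrder α] {a b c : α} {l : List α} :
    ListAlternating (a :: b :: c :: l) ↔ (b < a ∧ b ≤ c) ∧ ListAlternating (c :: l) := by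
  constructor
  · intro h
    refine ⟨⟨(h 0 (by simp)).2 Even.zero, not_lt.1 ((h 1 (by simp)).not.2 Nat.not_even_one)⟩, ?_⟩
    exact fun i hi => (h (i + 2) (by simpa using hi)).trans (by simp [Nat.even_add])
  · rintro ⟨⟨hab, hbc⟩, h⟩ (_ | _ | i) hi
    · simpa using hab
    · simpa using hbc
    · exact (h i (by simpa using hi)).trans (by simp [Nat.even_add])

theorem two_mul_listValleys_add_one_eq_length_iff {α : Type*} [LinearOrder α] :
    ∀ l : List α, 2 * listValleys l + 1 = l.length ↔ Odd l.length ∧ ListAlternating l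
  | [] => by simp
  | [a] => by simp [listValleys, ListAlternating]
  | [a, b] => by simp [listValleys, Nat.not_odd_iff_even.2 even_two]
  | a :: b :: c :: l => by
    have ih := two_mul_listValleys_add_one_eq_length_iff (c :: l)
    have hlt := two_mul_listValleys_lt_length (List.cons_ne_nil b (c :: l))
    have parity : Odd (a :: b :: c :: l).length ↔ Odd (c :: l).length := by
      simp [Nat.odd_add_one]
    rw [listAlternating_cons_cons_cons, parity]
    by_cases h : b < a ∧ b ≤ c
    · rw [listValleys_cons_cons_cons_of_lt_of_le h.1 h.2, and_iff_right h, ← ih]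
      simp only [List.length_cons]
      lia
    · rw [listValleys_cons_cons_cons_of_not h, ← parity]
      simp only [List.length_cons] at hlt ⊢
      grind

theorem two_mul_listValleys_ofFn_add_one_eq_iff {n : ℕ} (π : Equiv.Perm (Fin n)) :
    2 * listValleys (List.ofFn π) + 1 = n ↔ Odd n ∧ IsAlternating π := by
  simpa [IsAlternating, ListAlternating] using
    two_mul_listValleys_add_one_eq_length_iff (List.ofFn π)

theorem valleyWeight_eval_neg_one {K : Type*} [Field K] {n v : ℕ} (h : 2 * v < n) :
    (valleyWeight K n v).eval (-1) = if 2 * v + 1 = n then (-1) ^ v else 0 := by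
  have exponent_eq_zero : n - 1 - 2 * v = 0 ↔ 2 * v + 1 = n := by lia
  simp [valleyWeight, zero_pow_eq, exponent_eq_zero]

theorem eulerianPolynomial_eval_neg_one {n : ℕ} (hn : n ≠ 0) :
    (eulerianPolynomial n).eval (-1) =
      if Odd n then (-1) ^ (n / 2) * (eulerNumber n : ℝ) else 0 := by
  classical
  have weight_eval (π : Equiv.Perm (Fin n)) :
      (valleyWeight ℝ n (listValleys (List.ofFn π))).eval (-1) =
        if Odd n ∧ IsAlternating π then (-1) ^ (n / 2) else 0 := by
    have hne : List.ofFn π ≠ [] := by simpa using hn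
    have hlt := two_mul_listValleys_lt_length hne
    rw [List.length_ofFn] at hlt
    rw [valleyWeight_eval_neg_one hlt]
    simp only [← two_mul_listValleys_ofFn_add_one_eq_iff]
    split_ifs with h
    · rw [show n / 2 = listValleys (List.ofFn π) by lia]
    · rfl
  rw [eulerianPolynomial_eq_sum_valleyWeight hn, eval_finsetSum, eulerNumber,
    Finset.sum_congr rfl fun π _ => weight_eval π]
  split_ifs with h <;> simp [h, Finset.sum_ite, mul_comm]

end Permutations

/-- E_{2n+3} = (-1)^n · 2 · A'_{2n+2}(-1). -/
theorem euler_eq_two_deriv_eulerian_at_neg_one (n : ℕ) :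
    (eulerNumber (2 * n + 3) : ℝ) =
      (-1) ^ n * 2 * (Polynomial.derivative (eulerianPolynomial (2 * n + 2))).eval (-1) := by
  have eval_even : (eulerianPolynomial (2 * n + 2)).eval (-1) = 0 := by
    rw [eulerianPolynomial_eval_neg_one (by lia), if_neg (by grind)]
  have eval_odd : (eulerianPolynomial (2 * n + 3)).eval (-1) =
      (-1) ^ (n + 1) * (eulerNumber (2 * n + 3) : ℝ) := by
    rw [eulerianPolynomial_eval_neg_one (by lia), if_pos (by grind),
      show (2 * n + 3) / 2 = n + 1 by lia]
  have recurrence : (eulerianPolynomial (2 * n + 3)).eval (-1) =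
      -2 * (derivative (eulerianPolynomial (2 * n + 2))).eval (-1) := by
    rw [eulerianPolynomial_succ, eulerianOperator_apply, eval_add, eval_mul, eval_mul, eval_even]
    norm_num
  have sign_sq : ((-1 : ℝ) ^ n) * (-1) ^ n = 1 := by simp [← mul_pow]
  linear_combination (-1) ^ n * (eval_odd - recurrence) - eulerNumber (2 * n + 3) * sign_sq
end

section
/- For n ≥ 0 the refined Eulerian polynomial satisfies A_{2n+1}(p,q) = (1+pq)^n · A_{2n+1}(0, (p+q)/(1+pq)) as an identity of rational functions (equivalently, as a polynomial identity after clearing denominators). -/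
open Finset

/-!
Twice the factor that `π` contributes at index `i` is `(1 + xᵢ) ± (1 - xᵢ)`, with the minus sign
at a descent. Expanding the product over all indices writes `2 ^ m * ∑ π, ∏ i ∈ Des π, xᵢ` as a sum
over sets `S` of indices of `∏ i ∈ S, (1 - xᵢ) * ∏ i ∉ S, (1 + xᵢ)` times a signed count of
permutations. If `S` has a maximal run of odd length, reversing the one-line notation on that run
flips an odd number of signs, so the signed count vanishes. Every other `S` has as many even as odd
elements; for the weights `p, q, p, q, …` it contributes a multiple of
`((1 - p) * (1 - q)) ^ e * ((1 + p) * (1 + q)) ^ (n - e)`. Hence the sum is homogeneous of degree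
`n` in `1 + p * q` and `p + q`.
-/

section Balanced

/-- The interval `[a, b)` is a maximal run of consecutive elements of `S`; it is allowed to be
empty, including the case `b < a`. -/
structure IsMaximalRun (S : Finset ℕ) (a b : ℕ) : Prop where
  subset : Ico a b ⊆ S
  left : ∀ i ∈ S, i + 1 ≠ a
  right : b ∉ S

/-- A set of natural numbers with as many even as odd elements, encoded by the vanishing of the
alternating sum so that disjoint pieces add up. The other sets do not contribute to the refined
Eulerian polynomial of odd size. -/
def IsParityBalanced (S : Finset ℕ) : Prop := ∑ i ∈ S, (-1 : ℤ) ^ i = 0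

variable {S : Finset ℕ} {n : ℕ}

lemma sum_neg_one_pow_eq_card_sub_card (S : Finset ℕ) :
    ∑ i ∈ S, (-1 : ℤ) ^ i = #{i ∈ S | Even i} - #{i ∈ S | Odd i} := by
  simp only [card_filter, Nat.cast_sum, ← sum_sub_distrib]
  refine sum_congr rfl fun i _ => ?_
  rcases i.even_or_odd with hi | hi
  · simp [hi, hi.neg_one_pow, Nat.not_odd_iff_even.mpr hi]
  · simp [hi, hi.neg_one_pow, Nat.not_even_iff_odd.mpr hi]

lemma IsParityBalanced.card_even_eq_card_odd (hS : IsParityBalanced S) :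
    #{i ∈ S | Even i} = #{i ∈ S | Odd i} := by
  have := sum_neg_one_pow_eq_card_sub_card S
  rw [hS] at this
  omega

lemma IsParityBalanced.two_mul_card_even (hS : IsParityBalanced S) :
    2 * #{i ∈ S | Even i} = #S := by
  have hodd : {i ∈ S | ¬Even i} = {i ∈ S | Odd i} :=
    filter_congr fun i _ => Nat.not_even_iff_odd
  rw [← card_filter_add_card_filter_not (s := S) Even, hodd, ← hS.card_even_eq_card_odd, two_mul]

lemma sum_Ico_neg_one_pow_of_even {a b : ℕ} (h : Even (b - a)) :
    ∑ i ∈ Ico a b, (-1 : ℤ) ^ i = 0 := by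
  simp only [sum_Ico_eq_sum_range, pow_add, ← mul_sum, neg_one_geom_sum, if_pos h, mul_zero]

lemma IsParityBalanced.range_sdiff (hS : IsParityBalanced S) (hsub : S ⊆ range (2 * n)) :
    IsParityBalanced (range (2 * n) \ S) := by
  rw [IsParityBalanced, sum_sdiff_eq_sub hsub, hS, neg_one_geom_sum, if_pos (even_two_mul n),
    sub_zero]

lemma IsParityBalanced.card_even_add_card_even (hS : IsParityBalanced S)
    (hsub : S ⊆ range (2 * n)) :
    #{i ∈ S | Even i} + #{i ∈ range (2 * n) \ S | Even i} = n := by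
  have h₁ := hS.two_mul_card_even
  have h₂ := (hS.range_sdiff hsub).two_mul_card_even
  have h₃ := card_sdiff_add_card_eq_card hsub
  rw [card_range] at h₃
  omega

lemma isParityBalanced_of_even_maximalRuns (h : ∀ a b, IsMaximalRun S a b → Even (b - a)) :
    IsParityBalanced S := by
  -- Up to `k`, only the run `[a, k)` still in progress contributes to the alternating sum.
  have current_run (k : ℕ) : ∃ a ≤ k, Ico a k ⊆ S ∧ (∀ i ∈ S, i + 1 ≠ a) ∧
      ∑ i ∈ S with i < k, (-1 : ℤ) ^ i = ∑ i ∈ Ico a k, (-1 : ℤ) ^ i := by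
    induction k with
    | zero => exact ⟨0, by simp⟩
    | succ k ih =>
      obtain ⟨a, hak, hsub, hleft, hsum⟩ := ih
      by_cases hk : k ∈ S
      · have hfilter : {i ∈ S | i < k + 1} = insert k {i ∈ S | i < k} := by grind
        refine ⟨a, by omega, by grind, hleft, ?_⟩
        rw [hfilter, sum_insert (by simp), hsum, sum_Ico_succ_top hak, add_comm]
      · have hfilter : {i ∈ S | i < k + 1} = {i ∈ S | i < k} := by grind
        refine ⟨k + 1, le_rfl, by simp, by grind, ?_⟩
        rw [hfilter, hsum, sum_Ico_neg_one_pow_of_even (h a k ⟨hsub, hleft, hk⟩), Ico_self,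
          sum_empty]
  obtain ⟨b, hb⟩ : ∃ b, ∀ i ∈ S, i < b := ⟨S.sup id + 1, fun i hi =>
    Nat.lt_succ_of_le (le_sup (f := id) hi)⟩
  obtain ⟨a, -, hsub, hleft, hsum⟩ := current_run b
  rw [IsParityBalanced, ← filter_true_of_mem hb, hsum]
  exact sum_Ico_neg_one_pow_of_even (h a b ⟨hsub, hleft, fun hbS => (hb b hbS).false⟩)

variable {R : Type*} [CommRing R]

lemma prod_ite_even_eq_pow_mul_pow (S : Finset ℕ) (x y : R) :
    ∏ i ∈ S, (if Even i then x else y) = x ^ #{i ∈ S | Even i} * y ^ #{i ∈ S | Odd i} := by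
  simp only [prod_ite, prod_const, Nat.not_even_iff_odd]

lemma IsParityBalanced.prod_ite_even (hS : IsParityBalanced S) (x y : R) :
    ∏ i ∈ S, (if Even i then x else y) = (x * y) ^ #{i ∈ S | Even i} := by
  rw [prod_ite_even_eq_pow_mul_pow, ← hS.card_even_eq_card_odd, mul_pow]

end Balanced

section SignSum

/-- The permutation of `Fin m` reversing the interval `[a, b]` and fixing all other points.
Multiplying by it on the right reverses the corresponding block of the one-line notation. -/
def reverseIcc {m : ℕ} (a b : Fin m) : Equiv.Perm (Fin m) :=
  Function.Involutive.toPerm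
    (fun i => if h : a ≤ i ∧ i ≤ b then ⟨a + b - i, by omega⟩ else i)
    (fun i => by grind)

/-- The sign of the step of `π` from index `i` to `i + 1`: `-1` at a descent, `1`
otherwise, in particular where `π` has no step. -/
def stepSign {m : ℕ} (π : Equiv.Perm (Fin m)) (i : ℕ) : ℤ :=
  if i ∈ descentSet π then -1 else 1

/-- The sum over the permutations of `Fin m` of the product of their step signs on `S`: the
coefficient of `S` when the descent weights are expanded. -/
def signSum (m : ℕ) (S : Finset ℕ) : ℤ :=
  ∑ π : Equiv.Perm (Fin m), ∏ i ∈ S, stepSign π i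

variable {m : ℕ}

lemma mem_descentSet {π : Equiv.Perm (Fin m)} {i : ℕ} :
    i ∈ descentSet π ↔ ∃ h : i + 1 < m, π ⟨i + 1, h⟩ < π ⟨i, Nat.lt_of_succ_lt h⟩ := by
  simp only [descentSet, mem_filter, mem_range, and_iff_right_iff_imp]
  rintro ⟨h, -⟩
  omega

lemma reverseIcc_mk_of_mem {a b : Fin m} {i : ℕ} (hi : i < m) (hai : a ≤ i) (hib : i ≤ b) :
    reverseIcc a b ⟨i, hi⟩ = ⟨a + b - i, by omega⟩ :=
  dif_pos ⟨hai, hib⟩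

lemma reverseIcc_mk_of_notMem {a b : Fin m} {i : ℕ} (hi : i < m) (h : i < a ∨ b < i) :
    reverseIcc a b ⟨i, hi⟩ = ⟨i, hi⟩ :=
  dif_neg (by simp only [Fin.le_def]; omega)

lemma stepSign_mul_reverseIcc_of_mem (π : Equiv.Perm (Fin m)) {a b : Fin m} {i : ℕ}
    (hai : a ≤ i) (hib : i < b) :
    stepSign (π * reverseIcc a b) i = -stepSign π (a + b - 1 - i) := by
  have hlt : i + 1 < m := by omega
  have hlt' : a + b - 1 - i + 1 < m := by omega
  have himage : reverseIcc a b ⟨i, by omega⟩ = ⟨a + b - 1 - i + 1, hlt'⟩ := by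
    rw [reverseIcc_mk_of_mem _ hai hib.le, Fin.mk.injEq]
    omega
  have himage_succ : reverseIcc a b ⟨i + 1, hlt⟩ = ⟨a + b - 1 - i, by omega⟩ := by
    rw [reverseIcc_mk_of_mem _ (by omega) hib, Fin.mk.injEq]
    omega
  have hdescent : i ∈ descentSet (π * reverseIcc a b) ↔ a + b - 1 - i ∉ descentSet π := by
    simp only [mem_descentSet, hlt, hlt', exists_true_left, Equiv.Perm.mul_apply, himage,
      himage_succ, not_lt]
    exact (π.injective.ne (Fin.ne_of_lt (Nat.lt_succ_self _))).le_iff_lt.symm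
  by_cases h : a + b - 1 - i ∈ descentSet π <;> simp [stepSign, hdescent, h]

lemma stepSign_mul_reverseIcc_of_notMem (π : Equiv.Perm (Fin m)) {a b : Fin m} {i : ℕ}
    (h : i + 1 < a ∨ b < i) :
    stepSign (π * reverseIcc a b) i = stepSign π i := by
  have hdescent : i ∈ descentSet (π * reverseIcc a b) ↔ i ∈ descentSet π := by
    simp only [mem_descentSet, Equiv.Perm.mul_apply]
    refine exists_congr fun hi => ?_
    rw [reverseIcc_mk_of_notMem hi (by omega),
      reverseIcc_mk_of_notMem (Nat.lt_of_succ_lt hi) (by omega)]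
  simp only [stepSign, hdescent]

lemma prod_stepSign_mul_reverseIcc (π : Equiv.Perm (Fin m)) {S : Finset ℕ} {a b : Fin m}
    (hrun : IsMaximalRun S a b) (hab : a < b) :
    ∏ i ∈ S, stepSign (π * reverseIcc a b) i =
      (-1) ^ (b - a : ℕ) * ∏ i ∈ S, stepSign π i := by
  have houtside : ∏ i ∈ S \ Ico (a : ℕ) b, stepSign (π * reverseIcc a b) i =
      ∏ i ∈ S \ Ico (a : ℕ) b, stepSign π i := by
    refine prod_congr rfl fun i hi => stepSign_mul_reverseIcc_of_notMem π ?_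
    obtain ⟨hiS, hi⟩ := mem_sdiff.mp hi
    have hne_left := hrun.left i hiS
    have hne_right := ne_of_mem_of_not_mem hiS hrun.right
    rw [mem_Ico] at hi
    omega
  have hinside : ∏ i ∈ Ico (a : ℕ) b, stepSign (π * reverseIcc a b) i =
      (-1) ^ (b - a : ℕ) * ∏ i ∈ Ico (a : ℕ) b, stepSign π i :=
    calc ∏ i ∈ Ico (a : ℕ) b, stepSign (π * reverseIcc a b) i
        = ∏ i ∈ Ico (a : ℕ) b, -stepSign π (a + b - 1 - i) :=
          prod_congr rfl fun i hi => by
            rw [mem_Ico] at hi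
            exact stepSign_mul_reverseIcc_of_mem π hi.1 hi.2
      _ = (-1) ^ (b - a : ℕ) * ∏ i ∈ Ico (a : ℕ) b, stepSign π (a + b - 1 - i) := by
          rw [prod_neg, Nat.card_Ico]
      _ = (-1) ^ (b - a : ℕ) * ∏ i ∈ Ico (a : ℕ) b, stepSign π i := by
          rw [prod_Ico_reflect _ _ (by omega)]
          congr 3 <;> omega
  rw [← prod_sdiff hrun.subset, houtside, hinside, ← prod_sdiff hrun.subset]
  ring

lemma signSum_eq_zero_of_odd_maximalRun {S : Finset ℕ} {a b : Fin m}
    (hrun : IsMaximalRun S a b) (hodd : Odd (b - a : ℕ)) : signSum m S = 0 := by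
  have hab : a < b := Nat.lt_of_sub_pos hodd.pos
  have hneg : signSum m S = -signSum m S :=
    calc signSum m S = ∑ π : Equiv.Perm (Fin m), ∏ i ∈ S, stepSign (π * reverseIcc a b) i :=
          (Fintype.sum_equiv (Equiv.mulRight (reverseIcc a b)) _ _ fun _ => rfl).symm
      _ = -signSum m S := by
          simp only [prod_stepSign_mul_reverseIcc _ hrun hab, hodd.neg_one_pow, neg_one_mul,
            sum_neg_distrib, signSum]
  exact self_eq_neg.mp hneg

lemma isParityBalanced_of_signSum_ne_zero {S : Finset ℕ} (hS : S ⊆ range m)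
    (h : signSum (m + 1) S ≠ 0) : IsParityBalanced S := by
  refine isParityBalanced_of_even_maximalRuns fun a b hrun => ?_
  by_contra hodd
  rw [Nat.not_even_iff_odd] at hodd
  have hab : a < b := Nat.lt_of_sub_pos hodd.pos
  have hbm : b - 1 < m := mem_range.mp (hS (hrun.subset (mem_Ico.mpr (by omega))))
  exact h (signSum_eq_zero_of_odd_maximalRun (a := ⟨a, by omega⟩) (b := ⟨b, by omega⟩) hrun hodd)

end SignSum

section Expansion

variable {R : Type*} [CommRing R] {m : ℕ}

lemma two_pow_mul_prod_descentSet (x : ℕ → R) (π : Equiv.Perm (Fin (m + 1))) :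
    2 ^ m * ∏ i ∈ descentSet π, x i =
      ∏ i ∈ range m, (stepSign π i * (1 - x i) + (1 + x i)) := by
  have hsub : descentSet π ⊆ range m := fun i hi => by
    obtain ⟨hi, -⟩ := mem_descentSet.mp hi
    exact mem_range.mpr (by omega)
  calc 2 ^ m * ∏ i ∈ descentSet π, x i
      = ∏ i ∈ range m, 2 * if i ∈ descentSet π then x i else 1 := by
        rw [prod_mul_distrib, prod_const, card_range, prod_ite_mem, inter_eq_right.mpr hsub]
    _ = ∏ i ∈ range m, (stepSign π i * (1 - x i) + (1 + x i)) := by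
        refine prod_congr rfl fun i _ => ?_
        unfold stepSign
        split_ifs <;> push_cast <;> ring

lemma two_pow_mul_sum_prod_descentSet (x : ℕ → R) :
    2 ^ m * ∑ π : Equiv.Perm (Fin (m + 1)), ∏ i ∈ descentSet π, x i =
      ∑ S ∈ (range m).powerset,
        signSum (m + 1) S * ((∏ i ∈ S, (1 - x i)) * ∏ i ∈ range m \ S, (1 + x i)) := by
  simp only [mul_sum, two_pow_mul_prod_descentSet]
  simp_rw [prod_add (fun i => _ * (1 - x i)), prod_mul_distrib]
  rw [sum_comm]
  simp only [signSum, Int.cast_sum, Int.cast_prod, sum_mul, mul_assoc]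

end Expansion

section RefinedEulerian

lemma refinedEulerian_eq_sum_prod_descentSet (n : ℕ) (p q : ℝ) :
    refinedEulerian n p q =
      ∑ π : Equiv.Perm (Fin n), ∏ i ∈ descentSet π, if Even i then p else q := by
  simp only [refinedEulerian, odes, edes, prod_ite_even_eq_pow_mul_pow]

lemma four_pow_mul_refinedEulerian_odd (n : ℕ) (p q : ℝ) :
    4 ^ n * refinedEulerian (2 * n + 1) p q =
      ∑ S ∈ (range (2 * n)).powerset, signSum (2 * n + 1) S *
        (((1 - p) * (1 - q)) ^ #{i ∈ S | Even i} *
          ((1 + p) * (1 + q)) ^ #{i ∈ range (2 * n) \ S | Even i}) := by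
  rw [show (4 : ℝ) ^ n = 2 ^ (2 * n) by rw [pow_mul]; norm_num,
    refinedEulerian_eq_sum_prod_descentSet, two_pow_mul_sum_prod_descentSet]
  refine sum_congr rfl fun S hS => ?_
  rw [mem_powerset] at hS
  by_cases hzero : signSum (2 * n + 1) S = 0
  · simp only [hzero, Int.cast_zero, zero_mul]
  have hbalanced := isParityBalanced_of_signSum_ne_zero hS hzero
  simp only [apply_ite (1 - · : ℝ → ℝ), apply_ite (1 + · : ℝ → ℝ), hbalanced.prod_ite_even,
    (hbalanced.range_sdiff hS).prod_ite_even]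

theorem refinedEulerian_odd_reduction_general (n : ℕ) {p q p' q' r : ℝ}
    (hadd : p + q = r * (p' + q')) (hmul : 1 + p * q = r * (1 + p' * q')) :
    refinedEulerian (2 * n + 1) p q = r ^ n * refinedEulerian (2 * n + 1) p' q' := by
  have hsub : (1 - p) * (1 - q) = r * ((1 - p') * (1 - q')) := by
    linear_combination hmul - hadd
  have hsum : (1 + p) * (1 + q) = r * ((1 + p') * (1 + q')) := by
    linear_combination hmul + hadd
  refine mul_left_cancel₀ (pow_ne_zero n (four_ne_zero (α := ℝ))) ?_
  rw [mul_left_comm, four_pow_mul_refinedEulerian_odd, four_pow_mul_refinedEulerian_odd, mul_sum]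
  refine sum_congr rfl fun S hS => ?_
  rw [mem_powerset] at hS
  by_cases hzero : signSum (2 * n + 1) S = 0
  · simp only [hzero, Int.cast_zero, zero_mul, mul_zero]
  have hdegree : r ^ n = r ^ #{i ∈ S | Even i} * r ^ #{i ∈ range (2 * n) \ S | Even i} := by
    rw [← pow_add, (isParityBalanced_of_signSum_ne_zero hS hzero).card_even_add_card_even hS]
  rw [hsub, hsum, mul_pow r, mul_pow r, mul_mul_mul_comm, ← hdegree, mul_left_comm]

end RefinedEulerian

/-- A_{2n+1}(p,q) = (1+pq)^n A_{2n+1}(0, (p+q)/(1+pq)). -/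
theorem refinedEulerian_odd_reduction (n : ℕ) (p q : ℝ) (h : 1 + p * q ≠ 0) :
    refinedEulerian (2 * n + 1) p q =
      (1 + p * q) ^ n * refinedEulerian (2 * n + 1) 0 ((p + q) / (1 + p * q)) :=
  refinedEulerian_odd_reduction_general n (by rw [zero_add, mul_div_cancel₀ _ h])
    (by rw [zero_mul, add_zero, mul_one])
end

section
/- For n ≥ 0, A_{2n+2}(p,q) = (1+p)·(1+pq)^n · A_{2n+2}(0, (p+q)/(1+pq)) as an identity of rational functions. -/
open Finset

/-!
Record a permutation of `Fin (m + 1)` by its last value and append a new last value: the sums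
`f m k` of the descent weights with last value `k` satisfy
`f (m + 1) k = ∑ j < k, f m j + w m * ∑ j ≥ k, f m j`. Eliminating either the second or the first
sum turns this into a pure summation recurrence, so `f m` has two expansions, one in the binomials
`k.choose i` and one in the binomials `(m - k).choose i`. Using the first when index `m` is an
ascent and the second when it is a descent gives a recurrence for the total weight
(`descentSum_add_two`).

For the weights `p, q, p, q, …` the permutations of odd size cancel from it, leaving
`A_{2n+2} = (1 + p) H ^ n + (p + q) ∑ k < n, (2n+2 choose 2k+2) H ^ (n - 1 - k) A_{2k+2}`,
where `H = (1 - p) (1 - q)`. With `c = 1 + p q` and `r = (p + q) / c` we have `c (1 - r) = H` and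
`c r = p + q`, so `(1 + p) c ^ n A_{2n+2}(0, r)` satisfies the recurrence of `A_{2n+2}(p, q)`.
-/

section Insertion

variable {m : ℕ}

/-- Appends the value `k` to the one-line notation of `σ`, shifting the values `≥ k` up by one. -/
def appendValue (k : Fin (m + 1)) (σ : Equiv.Perm (Fin m)) : Equiv.Perm (Fin (m + 1)) :=
  ((finSuccEquiv' (Fin.last m)).trans (Equiv.optionCongr σ)).trans (finSuccEquiv' k).symm

lemma appendValue_last (k : Fin (m + 1)) (σ : Equiv.Perm (Fin m)) :
    appendValue k σ (Fin.last m) = k := by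
  simp [appendValue]

lemma appendValue_castSucc (k : Fin (m + 1)) (σ : Equiv.Perm (Fin m)) (i : Fin m) :
    appendValue k σ i.castSucc = k.succAbove (σ i) := by
  have : finSuccEquiv' (Fin.last m) i.castSucc = some i := by
    rw [← Fin.succAbove_last_apply, finSuccEquiv'_succAbove]
  simp [appendValue, this]

lemma appendValue_bijective (m : ℕ) :
    Function.Bijective
      fun x : Fin (m + 1) × Equiv.Perm (Fin m) ↦ appendValue x.1 x.2 := by
  rw [Fintype.bijective_iff_injective_and_card]
  refine ⟨?_, by simp [Fintype.card_perm, Nat.factorial_succ]⟩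
  rintro ⟨k, σ⟩ ⟨l, τ⟩ (h : appendValue k σ = appendValue l τ)
  obtain rfl : k = l := by rw [← appendValue_last k σ, h, appendValue_last]
  have hστ (i : Fin m) : σ i = τ i := by
    apply k.succAbove_right_injective
    rw [← appendValue_castSucc, h, appendValue_castSucc]
  rw [Equiv.ext hστ]

end Insertion

section DescentWeight

variable {R : Type*} [CommSemiring R] (w : ℕ → R)

/-- The weight of a permutation in which a descent at the (0-based) index `i` has weight `w i`. -/
def descentWeight {n : ℕ} (π : Equiv.Perm (Fin n)) : R :=
  ∏ i ∈ descentSet π, w i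

/-- The total descent weight of all permutations of `Fin n`; it specializes to the refined Eulerian
polynomials, with values in any commutative semiring. -/
def descentSum (n : ℕ) : R :=
  ∑ π : Equiv.Perm (Fin n), descentWeight w π

/-- The total descent weight of the permutations of `Fin n` extended by a forced descent after the
last entry. There is no such descent for `n = 0`, where the value is `1`. -/
def closedDescentSum : ℕ → R
  | 0 => 1
  | n + 1 => w n * descentSum w (n + 1)

/-- The total descent weight of the permutations of `Fin (m + 1)` with last value `k`. The value is
a natural number, so that sums over values are sums over ranges; the sum is `0` for `k > m`. -/
def lastValueSum (m k : ℕ) : R :=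
  ∑ π : Equiv.Perm (Fin (m + 1)) with (π (Fin.last m) : ℕ) = k, descentWeight w π

lemma descentSum_zero : descentSum w 0 = 1 := by
  simp [descentSum, descentWeight, descentSet]

lemma coe_mem_descentSet {m : ℕ} {π : Equiv.Perm (Fin (m + 1))} {i : Fin m} :
    (i : ℕ) ∈ descentSet π ↔ π i.succ < π i.castSucc := by
  have hi : (i : ℕ) < m + 1 := i.isLt.trans m.lt_succ_self
  simp only [descentSet, mem_filter, mem_range, hi, true_and]
  exact ⟨fun ⟨_, h⟩ ↦ h, fun h ↦ ⟨Nat.succ_lt_succ i.isLt, h⟩⟩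

lemma descentWeight_eq_prod {m : ℕ} (π : Equiv.Perm (Fin (m + 1))) :
    descentWeight w π = ∏ i : Fin m, if π i.succ < π i.castSucc then w i else 1 := by
  have hsub : descentSet π ⊆ range m := fun i hi ↦ by
    obtain ⟨h, -⟩ := (mem_filter.1 hi).2
    exact mem_range.2 (Nat.lt_of_succ_lt_succ h)
  calc descentWeight w π = ∏ i ∈ range m, if i ∈ descentSet π then w i else 1 := by
        rw [prod_ite_mem, inter_eq_right.2 hsub, descentWeight]
    _ = ∏ i : Fin m, if π i.succ < π i.castSucc then w i else 1 := by
        simp only [prod_range, coe_mem_descentSet]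

lemma descentWeight_appendValue {m : ℕ} (k : Fin (m + 2)) (σ : Equiv.Perm (Fin (m + 1))) :
    descentWeight w (appendValue k σ) =
      descentWeight w σ * if (k : ℕ) ≤ σ (Fin.last m) then w m else 1 := by
  simp only [descentWeight_eq_prod, Fin.prod_univ_castSucc, Fin.succ_last, appendValue_last,
    ← Fin.castSucc_succ, appendValue_castSucc, Fin.succAbove_lt_succAbove_iff,
    Fin.lt_succAbove_iff_le_castSucc, Fin.le_def, Fin.val_castSucc, Fin.val_last]

lemma sum_descentWeight_mul_last (m : ℕ) (φ : ℕ → R) :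
    ∑ σ : Equiv.Perm (Fin (m + 1)), descentWeight w σ * φ (σ (Fin.last m)) =
      ∑ j ∈ range (m + 1), lastValueSum w m j * φ j := by
  rw [← sum_fiberwise_of_maps_to (g := fun σ ↦ (σ (Fin.last m) : ℕ))
    fun σ _ ↦ mem_range.2 (σ (Fin.last m)).isLt]
  refine sum_congr rfl fun j _ ↦ ?_
  rw [lastValueSum, sum_mul]
  exact sum_congr rfl fun σ hσ ↦ by rw [(mem_filter.1 hσ).2]

lemma sum_lastValueSum (m : ℕ) :
    ∑ k ∈ range (m + 1), lastValueSum w m k = descentSum w (m + 1) := by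
  simpa [descentSum] using (sum_descentWeight_mul_last w m fun _ ↦ 1).symm

lemma lastValueSum_zero_zero : lastValueSum w 0 0 = 1 := by
  simpa [descentSum, descentWeight_eq_prod] using sum_lastValueSum w 0

lemma lastValueSum_succ {m k : ℕ} (hk : k ≤ m + 1) :
    lastValueSum w (m + 1) k =
      ∑ j ∈ range k, lastValueSum w m j + w m * ∑ j ∈ Ico k (m + 1), lastValueSum w m j := by
  calc lastValueSum w (m + 1) k
      = ∑ σ : Equiv.Perm (Fin (m + 1)),
          descentWeight w (appendValue ⟨k, Nat.lt_succ_of_le hk⟩ σ) := by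
        rw [lastValueSum, sum_filter, ← (appendValue_bijective (m + 1)).sum_comp,
          Fintype.sum_prod_type, Fintype.sum_eq_single ⟨k, Nat.lt_succ_of_le hk⟩]
        · simp [appendValue_last]
        · intro l hl
          simp [appendValue_last, Fin.val_ne_iff.2 hl]
    _ = ∑ j ∈ range (m + 1), lastValueSum w m j * if k ≤ j then w m else 1 := by
        simp only [descentWeight_appendValue]
        exact sum_descentWeight_mul_last w m fun j ↦ if k ≤ j then w m else 1
    _ = _ := by
        rw [← sum_range_add_sum_Ico _ hk, mul_sum]
        congr 1 <;> refine sum_congr rfl fun j hj ↦ ?_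
        · rw [if_neg (mem_range.1 hj).not_ge, mul_one]
        · rw [if_pos (mem_Ico.1 hj).1, mul_comm]

end DescentWeight

section SummationRecurrence

variable {R : Type*} [CommSemiring R]

lemma sum_range_choose_cast (k i : ℕ) :
    ∑ j ∈ range k, (j.choose i : R) = k.choose (i + 1) := by
  induction k with
  | zero => simp
  | succ k ih => rw [sum_range_succ, ih, Nat.choose_succ_succ, Nat.cast_add, add_comm]

variable {g : ℕ → ℕ → R} {u c : ℕ → R}

lemma eq_sum_choose_of_succ_eq_sum (hzero : g 0 0 = c 0)
    (hsucc : ∀ m k, k ≤ m + 1 → g (m + 1) k = u m * ∑ j ∈ range k, g m j + c (m + 1))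
    {m k : ℕ} (hk : k ≤ m) :
    g m k = ∑ l ∈ range (m + 1), k.choose (m - l) * ((∏ r ∈ Ico l m, u r) * c l) := by
  induction m generalizing k with
  | zero => simp [Nat.le_zero.1 hk, hzero]
  | succ m ih =>
    have hlt {j : ℕ} (hj : j ∈ range k) : j ≤ m := Nat.le_of_lt_succ ((mem_range.1 hj).trans_le hk)
    rw [hsucc m k hk, sum_range_succ _ (m + 1), sum_congr rfl fun j hj ↦ ih (hlt hj), sum_comm,
      mul_sum]
    congr 1
    · refine sum_congr rfl fun l hl ↦ ?_
      have hl : l ≤ m := Nat.le_of_lt_succ (mem_range.1 hl)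
      rw [← sum_mul, sum_range_choose_cast, prod_Ico_succ_top hl, Nat.succ_sub hl]
      ring
    · simp

lemma sum_sum_eq_sum_choose_of_succ_eq_sum (hzero : g 0 0 = c 0)
    (hsucc : ∀ m k, k ≤ m + 1 → g (m + 1) k = u m * ∑ j ∈ range k, g m j + c (m + 1)) (m : ℕ) :
    ∑ k ∈ range (m + 2), ∑ j ∈ range k, g m j =
      ∑ l ∈ range (m + 1), (m + 2).choose l * ((∏ r ∈ Ico l m, u r) * c l) := by
  have hinner {k : ℕ} (hk : k ∈ range (m + 2)) : ∑ j ∈ range k, g m j =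
      ∑ l ∈ range (m + 1), k.choose (m - l + 1) * ((∏ r ∈ Ico l m, u r) * c l) := by
    have hlt {j : ℕ} (hj : j ∈ range k) : j ≤ m := by grind
    rw [sum_congr rfl fun j hj ↦ eq_sum_choose_of_succ_eq_sum hzero hsucc (hlt hj), sum_comm]
    simp only [← sum_mul, sum_range_choose_cast]
  rw [sum_congr rfl fun k hk ↦ hinner hk, sum_comm]
  refine sum_congr rfl fun l hl ↦ ?_
  have hl : l ≤ m := Nat.le_of_lt_succ (mem_range.1 hl)
  rw [← sum_mul, sum_range_choose_cast,
    Nat.choose_symm_of_eq_add (show m + 2 = m - l + 1 + 1 + l by lia)]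

end SummationRecurrence

section DescentSumRecurrence

variable {R : Type*} [CommRing R] (w : ℕ → R)

lemma lastValueSum_succ_eq_sum_below {m k : ℕ} (hk : k ≤ m + 1) :
    lastValueSum w (m + 1) k =
      (1 - w m) * ∑ j ∈ range k, lastValueSum w m j + closedDescentSum w (m + 1) := by
  rw [lastValueSum_succ w hk, closedDescentSum, ← sum_lastValueSum,
    ← sum_range_add_sum_Ico _ hk]
  ring

lemma sum_Ico_lastValueSum_eq_sum_reflect {m k : ℕ} (hk : k ≤ m + 1) :
    ∑ j ∈ Ico (m + 1 - k) (m + 1), lastValueSum w m j =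
      ∑ j ∈ range k, lastValueSum w m (m - j) := by
  rw [range_eq_Ico, sum_Ico_reflect _ _ hk, Nat.sub_zero]

lemma lastValueSum_succ_eq_sum_above {m k : ℕ} (hk : k ≤ m + 1) :
    lastValueSum w (m + 1) (m + 1 - k) =
      (w m - 1) * ∑ j ∈ range k, lastValueSum w m (m - j) + descentSum w (m + 1) := by
  rw [lastValueSum_succ w (Nat.sub_le _ _), ← sum_lastValueSum,
    ← sum_range_add_sum_Ico _ (Nat.sub_le (m + 1) k), sum_Ico_lastValueSum_eq_sum_reflect w hk]
  ring

lemma descentSum_add_two_eq_sum_sum (m : ℕ) :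
    descentSum w (m + 2) =
      ∑ k ∈ range (m + 2), ∑ j ∈ range k, lastValueSum w m j +
        w m * ∑ k ∈ range (m + 2), ∑ j ∈ range k, lastValueSum w m (m - j) := by
  have hle {k : ℕ} (hk : k ∈ range (m + 2)) : k ≤ m + 1 := Nat.le_of_lt_succ (mem_range.1 hk)
  rw [← sum_lastValueSum, sum_congr rfl fun k hk ↦ lastValueSum_succ w (hle hk), sum_add_distrib,
    ← mul_sum, ← sum_range_reflect fun k ↦ ∑ j ∈ Ico k (m + 1), lastValueSum w m j]
  congr 2
  exact sum_congr rfl fun k hk ↦ sum_Ico_lastValueSum_eq_sum_reflect w (hle hk)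

lemma descentSum_add_two (m : ℕ) :
    descentSum w (m + 2) = ∑ l ∈ range (m + 1), (m + 2).choose l *
      ((∏ r ∈ Ico l m, (1 - w r)) *
        (closedDescentSum w l + (-1) ^ (m - l) * w m * descentSum w l)) := by
  have hasc := sum_sum_eq_sum_choose_of_succ_eq_sum (g := lastValueSum w)
    (c := closedDescentSum w) (lastValueSum_zero_zero w)
    (fun _ _ ↦ lastValueSum_succ_eq_sum_below w) m
  have hdesc := sum_sum_eq_sum_choose_of_succ_eq_sum (g := fun m k ↦ lastValueSum w m (m - k))
    (c := descentSum w) ((lastValueSum_zero_zero w).trans (descentSum_zero w).symm)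
    (fun _ _ ↦ lastValueSum_succ_eq_sum_above w) m
  rw [descentSum_add_two_eq_sum_sum, hasc, hdesc, mul_sum, ← sum_add_distrib]
  refine sum_congr rfl fun l _ ↦ ?_
  have hneg : ∏ r ∈ Ico l m, (w r - 1) = (-1) ^ (m - l) * ∏ r ∈ Ico l m, (1 - w r) := by
    simp only [← neg_sub 1 (w _), prod_neg, Nat.card_Ico]
  rw [hneg]
  ring

end DescentSumRecurrence

section AlternatingWeight

variable {R : Type*}

/-- The weights `p, q, p, q, …` of the refined Eulerian polynomials: `p` on the odd and `q` on the
even 1-based positions. -/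
def alternatingWeight (p q : R) (i : ℕ) : R := if Even i then p else q

lemma alternatingWeight_two_mul (p q : R) (k : ℕ) : alternatingWeight p q (2 * k) = p :=
  if_pos (even_two_mul k)

lemma alternatingWeight_two_mul_add_one (p q : R) (k : ℕ) :
    alternatingWeight p q (2 * k + 1) = q :=
  if_neg (Nat.not_even_two_mul_add_one k)

lemma refinedEulerian_eq_descentSum (n : ℕ) (p q : ℝ) :
    refinedEulerian n p q = descentSum (alternatingWeight p q) n := by
  simp only [refinedEulerian, descentSum, descentWeight, alternatingWeight, prod_ite, prod_const,
    odes, edes, Nat.not_even_iff_odd]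

lemma sum_range_two_mul_add_one [AddCommMonoid R] (f : ℕ → R) (n : ℕ) :
    ∑ l ∈ range (2 * n + 1), f l =
      f 0 + ∑ k ∈ range n, (f (2 * k + 1) + f (2 * k + 2)) := by
  induction n with
  | zero => simp
  | succ n ih =>
    rw [sum_range_succ _ n, ← add_assoc, ← ih, Nat.mul_succ, sum_range_succ, sum_range_succ,
      add_assoc]

variable [CommRing R]

lemma prod_Ico_one_sub_alternatingWeight (p q : R) {k n : ℕ} (hkn : k ≤ n) :
    ∏ r ∈ Ico (2 * k) (2 * n), (1 - alternatingWeight p q r) = ((1 - p) * (1 - q)) ^ (n - k) := by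
  induction n, hkn using Nat.le_induction with
  | base => simp
  | succ n hkn ih =>
    rw [Nat.mul_succ, prod_Ico_succ_top (by lia), prod_Ico_succ_top (by lia), ih,
      alternatingWeight_two_mul, alternatingWeight_two_mul_add_one, Nat.succ_sub hkn, pow_succ,
      mul_assoc]

lemma descentSum_alternatingWeight_two_mul_add_two (p q : R) (n : ℕ) :
    descentSum (alternatingWeight p q) (2 * n + 2) =
      (1 + p) * ((1 - p) * (1 - q)) ^ n +
        (p + q) * ∑ k ∈ range n, (2 * n + 2).choose (2 * k + 2) *
          (((1 - p) * (1 - q)) ^ (n - (k + 1)) *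
            descentSum (alternatingWeight p q) (2 * k + 2)) := by
  rw [descentSum_add_two, sum_range_two_mul_add_one, mul_sum]
  simp only [closedDescentSum, alternatingWeight_two_mul, alternatingWeight_two_mul_add_one]
  congr 1
  · have hprod := prod_Ico_one_sub_alternatingWeight p q n.zero_le
    rw [mul_zero, Nat.sub_zero] at hprod
    rw [hprod, descentSum_zero, Nat.sub_zero, (even_two_mul n).neg_one_pow, Nat.choose_zero_right]
    ring
  · refine sum_congr rfl fun k hk ↦ ?_
    have hkn : k + 1 ≤ n := mem_range.1 hk
    have hodd : (-1 : R) ^ (2 * n - (2 * k + 1)) = -1 :=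
      Odd.neg_one_pow ⟨n - (k + 1), by lia⟩
    have heven : (-1 : R) ^ (2 * n - (2 * k + 2)) = 1 :=
      Even.neg_one_pow ⟨n - (k + 1), by lia⟩
    have hprod : ∏ r ∈ Ico (2 * k + 2) (2 * n), (1 - alternatingWeight p q r) =
        ((1 - p) * (1 - q)) ^ (n - (k + 1)) := prod_Ico_one_sub_alternatingWeight p q hkn
    rw [hodd, heven, hprod]
    ring

theorem refinedEulerian_even_reduction_general {p q r : R} (hr : (1 + p * q) * r = p + q)
    (n : ℕ) :
    descentSum (alternatingWeight p q) (2 * n + 2) =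
      (1 + p) * (1 + p * q) ^ n * descentSum (alternatingWeight 0 r) (2 * n + 2) := by
  have hH : (1 - p) * (1 - q) = (1 + p * q) * (1 - r) := by linear_combination hr
  induction n using Nat.strong_induction_on with
  | _ n ih =>
    rw [descentSum_alternatingWeight_two_mul_add_two p q,
      descentSum_alternatingWeight_two_mul_add_two 0 r, mul_add]
    congr 1
    · rw [hH, mul_pow]
      ring
    · simp only [mul_sum]
      refine sum_congr rfl fun k hk ↦ ?_
      have hk : k < n := mem_range.1 hk
      have hpow : (1 + p * q) ^ n =
          (1 + p * q) * ((1 + p * q) ^ (n - (k + 1)) * (1 + p * q) ^ k) := by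
        rw [← pow_add, ← pow_succ']
        congr 1
        lia
      rw [ih k hk, ← hr, hH, mul_pow, hpow]
      ring

end AlternatingWeight

/-- A_{2n+2}(p,q) = (1+p)(1+pq)^n A_{2n+2}(0, (p+q)/(1+pq)). -/
theorem refinedEulerian_even_reduction (n : ℕ) (p q : ℝ) (h : 1 + p * q ≠ 0) :
    refinedEulerian (2 * n + 2) p q =
      (1 + p) * (1 + p * q) ^ n * refinedEulerian (2 * n + 2) 0 ((p + q) / (1 + p * q)) := by
  simpa only [refinedEulerian_eq_descentSum] using
    refinedEulerian_even_reduction_general (mul_div_cancel₀ (p + q) h) n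
end

section
/- For all n ≥ k ≥ 0, A_{2n+2,k} = Σ_{2i+j = k or k-1, i,j ≥ 0} C(n-j, i) · 2^j · a_{2n+2,j}, where A_{m,k} is the Eulerian number and a_{m,j} counts permutations of [m] with j even descents and no odd descents. -/
open Finset

/-! Write `c = a + b` and `d = ab + ba` in the free algebra on the letters `a` (ascent) and `b`
(descent), and let `Ψ n` be the sum of the ascent-descent words of the permutations of
`Fin (n + 1)`. Inserting a new largest entry into a permutation turns its word `W` into words with
sum `b W + W a + D W`, where the derivation `D` sends every letter to `ab`; inserting a new smallest
entry gives the same with `a` and `b` exchanged. Hence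
`2 Ψ (n + 1) = c Ψ n + Ψ n c + Δ (Ψ n)`, where the derivation `Δ` sends every letter to `d`, and so
`Ψ n` is a noncommutative polynomial in `c` and `d`.

Weight descents at odd positions by `p` and those at even positions by `q`. Then each `d`
contributes `p + q` and each pair of consecutive `c`s contributes `(1 + p) (1 + q)`, so up to
homogeneity only the ratio `y = (p + q) / (1 + p q)` matters:
`A (p, q) = (1 + p) (1 + p q) ^ n A (0, y)` for permutations of `[2 n + 2]`. Taking `p = q` and
comparing coefficients gives the expansion, because the coefficient of `X ^ r` in
`(1 + X) (1 + X ^ 2) ^ N` is `N.choose (r / 2)` for even and for odd `r` alike.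
-/

section InsertPerm

variable {n : ℕ}

/-- The permutation with value `k` at position `j` whose other values, read in order, are
order-isomorphic to those of `σ`. -/
def insertPerm (k j : Fin (n + 1)) (σ : Equiv.Perm (Fin n)) : Equiv.Perm (Fin (n + 1)) :=
  (finSuccEquiv' j).trans ((Equiv.optionCongr σ).trans (finSuccEquiv' k).symm)

lemma coe_insertPerm (k j : Fin (n + 1)) (σ : Equiv.Perm (Fin n)) :
    ⇑(insertPerm k j σ) = j.insertNth k (k.succAbove ∘ σ) := by
  rw [Fin.eq_insertNth_iff]
  refine ⟨by simp [insertPerm], funext fun i => ?_⟩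
  simp [insertPerm, Fin.removeNth]

lemma insertPerm_bijective (k : Fin (n + 1)) :
    Function.Bijective fun a : Equiv.Perm (Fin n) × Fin (n + 1) => insertPerm k a.2 a.1 := by
  refine (Fintype.bijective_iff_injective_and_card _).mpr ⟨?_, ?_⟩
  · rintro ⟨σ, j⟩ ⟨σ', j'⟩ h
    have coe_eq : (j.insertNth k (k.succAbove ∘ σ) : Fin (n + 1) → Fin (n + 1)) =
        j'.insertNth k (k.succAbove ∘ σ') := by
      simpa only [coe_insertPerm] using congrArg DFunLike.coe h
    obtain rfl : j = j' := by
      by_contra hj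
      obtain ⟨i, rfl⟩ := Fin.exists_succAbove_eq hj
      simpa using (congrFun coe_eq (j'.succAbove i)).symm
    refine Prod.ext (Equiv.ext fun i => ?_) rfl
    simpa using congrFun coe_eq (j.succAbove i)
  · simp [Fintype.card_perm, Nat.factorial_succ, mul_comm]

lemma sum_perm_eq_sum_insertPerm {M : Type*} [AddCommMonoid M] (k : Fin (n + 1))
    (f : Equiv.Perm (Fin (n + 1)) → M) :
    ∑ π, f π = ∑ σ, ∑ j, f (insertPerm k j σ) := by
  rw [← Fintype.sum_prod_type']
  exact ((insertPerm_bijective k).sum_comp f).symm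

end InsertPerm

section LetterDerivation

open TrivSqZeroExt

variable {R X : Type*} [CommSemiring R]

/-- The derivation of the free algebra that sends every letter to `z`. -/
def letterDerivation (z : FreeAlgebra R X) : FreeAlgebra R X →ₗ[R] FreeAlgebra R X :=
  (TrivSqZeroExt.sndHom _ _).restrictScalars R ∘ₗ
    (FreeAlgebra.lift R fun x : X => inl (FreeAlgebra.ι R x) + inr z).toLinearMap

variable (z : FreeAlgebra R X)

@[simp]
lemma letterDerivation_one : letterDerivation z 1 = 0 := by
  simp [letterDerivation]

@[simp]
lemma letterDerivation_ι (x : X) : letterDerivation z (FreeAlgebra.ι R x) = z := by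
  simp [letterDerivation]

lemma letterDerivation_mul (u v : FreeAlgebra R X) :
    letterDerivation z (u * v) = letterDerivation z u * v + u * letterDerivation z v := by
  have fst_lift : (TrivSqZeroExt.fstHom R _ _).comp
      (FreeAlgebra.lift R fun x : X => inl (FreeAlgebra.ι R x) + inr z) = AlgHom.id R _ := by
    ext x; simp
  have fst_eq (u : FreeAlgebra R X) :
      (FreeAlgebra.lift R (fun x : X => inl (FreeAlgebra.ι R x) + inr z) u).fst = u :=
    DFunLike.congr_fun fst_lift u
  simp only [letterDerivation, LinearMap.comp_apply, AlgHom.toLinearMap_apply, map_mul,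
    LinearMap.restrictScalars_apply, sndHom_apply, snd_mul, fst_eq]
  rw [smul_eq_mul, op_smul_eq_mul, add_comm]

lemma letterDerivation_add (z' u : FreeAlgebra R X) :
    letterDerivation (z + z') u = letterDerivation z u + letterDerivation z' u := by
  induction u using FreeAlgebra.induction with
  | grade0 r => simp [Algebra.algebraMap_eq_smul_one]
  | grade1 x => simp
  | mul u v hu hv => simp only [letterDerivation_mul, hu, hv]; noncomm_ring
  | add u v hu hv => simp only [map_add, hu, hv]; abel

end LetterDerivation

section CDIndex

open FreeAlgebra

/-- The variable `a` of `ab`-polynomials: the letter of an ascent. -/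
def ascentLetter (R : Type*) [CommSemiring R] : FreeAlgebra R Bool := ι R false

/-- The variable `b` of `ab`-polynomials: the letter of a descent. -/
def descentLetter (R : Type*) [CommSemiring R] : FreeAlgebra R Bool := ι R true

/-- The `cd`-variable `c = a + b`. -/
def cVar (R : Type*) [CommSemiring R] : FreeAlgebra R Bool := ascentLetter R + descentLetter R

/-- The `cd`-variable `d = ab + ba`. -/
def dVar (R : Type*) [CommSemiring R] : FreeAlgebra R Bool :=
  ascentLetter R * descentLetter R + descentLetter R * ascentLetter R

/-- The letter `a` or `b` of two consecutive entries `x`, `y`, according to whether they form an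
ascent or a descent. -/
def stepLetter (R : Type*) [CommSemiring R] {α : Type*} [LinearOrder α] (x y : α) :
    FreeAlgebra R Bool :=
  if y < x then descentLetter R else ascentLetter R

/-- The `ab`-word recording the ascents and descents of a sequence. -/
def descentWord (R : Type*) [CommSemiring R] {α : Type*} [LinearOrder α] {n : ℕ}
    (f : Fin (n + 1) → α) : FreeAlgebra R Bool :=
  (List.ofFn fun i : Fin n => stepLetter R (f i.castSucc) (f i.succ)).prod

/-- The `ab`-index of the permutations of `Fin (n + 1)`, homogeneous of degree `n`. -/
def abIndex (R : Type*) [CommSemiring R] (n : ℕ) : FreeAlgebra R Bool :=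
  ∑ π : Equiv.Perm (Fin (n + 1)), descentWord R π

section DescentWord

variable {R : Type*} [CommSemiring R] {α : Type*} [LinearOrder α] {n : ℕ}

lemma stepLetter_of_lt {x y : α} (h : x < y) : stepLetter R x y = ascentLetter R :=
  if_neg h.not_gt

lemma stepLetter_of_gt {x y : α} (h : y < x) : stepLetter R x y = descentLetter R :=
  if_pos h

lemma letterDerivation_stepLetter (z : FreeAlgebra R Bool) (x y : α) :
    letterDerivation z (stepLetter R x y) = z := by
  unfold stepLetter
  split_ifs <;> exact letterDerivation_ι z _

@[simp]
lemma descentWord_one (f : Fin 1 → α) : descentWord R f = 1 := by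
  simp [descentWord]

lemma descentWord_cons (x : α) (f : Fin (n + 1) → α) :
    descentWord R (Fin.cons x f : Fin (n + 2) → α) = stepLetter R x (f 0) * descentWord R f := by
  simp [descentWord, List.ofFn_succ, ← Fin.succ_castSucc, -Fin.castSucc_succ]

lemma descentWord_comp_strictMono {β : Type*} [LinearOrder β] {g : α → β} (hg : StrictMono g)
    (f : Fin (n + 1) → α) : descentWord R (g ∘ f) = descentWord R f := by
  simp [descentWord, stepLetter, hg.lt_iff_lt]

-- Inserting `M` between two entries replaces their letter by `u * v`, whence the derivation; the
-- last summand comes from inserting `M` at the end.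
lemma sum_descentWord_cons_insertNth {M x : α} {f : Fin n → α} {u v : FreeAlgebra R Bool}
    (hx : stepLetter R x M = u) (hu : ∀ i, stepLetter R (f i) M = u)
    (hv : ∀ i, stepLetter R M (f i) = v) :
    ∑ j : Fin (n + 1), descentWord R (Fin.cons x (j.insertNth M f) : Fin (n + 2) → α) =
      letterDerivation (u * v) (descentWord R (Fin.cons x f : Fin (n + 1) → α)) +
        descentWord R (Fin.cons x f : Fin (n + 1) → α) * u := by
  induction n generalizing x with
  | zero => simp [descentWord_cons, hx]
  | succ n ih =>
    obtain ⟨y, g, rfl⟩ := Fin.exists_cons f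
    simp only [Fin.forall_fin_succ, Fin.cons_zero, Fin.cons_succ] at hu hv
    have insert_later (j : Fin (n + 1)) :
        descentWord R (Fin.cons x (j.succ.insertNth M (Fin.cons y g : Fin (n + 1) → α)) :
            Fin (n + 3) → α) =
          stepLetter R x y * descentWord R (Fin.cons y (j.insertNth M g) : Fin (n + 2) → α) := by
      rw [Fin.insertNth_succ_cons, descentWord_cons, Fin.cons_zero]
    rw [Fin.sum_univ_succ, Fin.insertNth_zero']
    simp only [insert_later]
    rw [← mul_sum, ih hu.1 hu.2 hv.2]
    simp only [descentWord_cons, Fin.cons_zero, hx, hv.1, letterDerivation_mul,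
      letterDerivation_stepLetter]
    noncomm_ring

lemma sum_descentWord_insertNth {M : α} {f : Fin (n + 1) → α} {u v : FreeAlgebra R Bool}
    (hu : ∀ i, stepLetter R (f i) M = u) (hv : ∀ i, stepLetter R M (f i) = v) :
    ∑ j : Fin (n + 2), descentWord R (j.insertNth M f : Fin (n + 2) → α) =
      v * descentWord R f + letterDerivation (u * v) (descentWord R f) + descentWord R f * u := by
  obtain ⟨x, g, rfl⟩ := Fin.exists_cons f
  simp only [Fin.forall_fin_succ, Fin.cons_zero, Fin.cons_succ] at hu hv
  rw [Fin.sum_univ_succ, Fin.insertNth_zero', descentWord_cons, Fin.cons_zero, hv.1, add_assoc]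
  simp only [Fin.insertNth_succ_cons]
  rw [sum_descentWord_cons_insertNth hu.1 hu.2 hv.2]

end DescentWord

section ABIndex

variable (R : Type*) [CommSemiring R] (n : ℕ)

lemma abIndex_succ_of_insert {k : Fin (n + 2)} {u v : FreeAlgebra R Bool}
    (hu : ∀ i, stepLetter R (k.succAbove i) k = u)
    (hv : ∀ i, stepLetter R k (k.succAbove i) = v) :
    abIndex R (n + 1) =
      v * abIndex R n + letterDerivation (u * v) (abIndex R n) + abIndex R n * u := by
  simp only [abIndex, sum_perm_eq_sum_insertPerm k, coe_insertPerm, mul_sum, sum_mul, map_sum,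
    ← sum_add_distrib]
  refine sum_congr rfl fun σ _ => ?_
  rw [sum_descentWord_insertNth (f := k.succAbove ∘ σ) (fun i => hu (σ i)) fun i => hv (σ i),
    descentWord_comp_strictMono k.strictMono_succAbove]

lemma two_mul_abIndex_succ :
    2 * abIndex R (n + 1) =
      cVar R * abIndex R n + abIndex R n * cVar R + letterDerivation (dVar R) (abIndex R n) := by
  have insert_max := abIndex_succ_of_insert R n (k := Fin.last (n + 1))
    (fun i => stepLetter_of_lt <| by simp [Fin.castSucc_lt_last])
    (fun i => stepLetter_of_gt <| by simp [Fin.castSucc_lt_last])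
  have insert_min := abIndex_succ_of_insert R n (k := 0)
    (fun i => stepLetter_of_gt <| by simp)
    (fun i => stepLetter_of_lt <| by simp)
  rw [two_mul]
  nth_rw 1 [insert_max]
  rw [insert_min, dVar, cVar, letterDerivation_add]
  noncomm_ring

end ABIndex

section CDPolynomial

/-- The `cd`-polynomials that are homogeneous of degree `n`, where `c` has degree `1` and `d` has
degree `2`. They are built by prepending variables. -/
def cdPolynomial (R : Type*) [CommSemiring R] : ℕ → Submodule R (FreeAlgebra R Bool)
  | 0 => 1
  | 1 => Submodule.span R {cVar R}
  | n + 2 => (cdPolynomial R (n + 1)).map (LinearMap.mulLeft R (cVar R)) ⊔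
      (cdPolynomial R n).map (LinearMap.mulLeft R (dVar R))

variable {R : Type*} [CommSemiring R] {n : ℕ} {x : FreeAlgebra R Bool}

lemma mem_cdPolynomial_zero : x ∈ cdPolynomial R 0 ↔ ∃ r : R, r • 1 = x := by
  rw [cdPolynomial, Submodule.one_eq_span, Submodule.mem_span_singleton]

lemma mem_cdPolynomial_one : x ∈ cdPolynomial R 1 ↔ ∃ r : R, r • cVar R = x := by
  rw [cdPolynomial, Submodule.mem_span_singleton]

lemma mem_cdPolynomial_add_two :
    x ∈ cdPolynomial R (n + 2) ↔
      ∃ u ∈ cdPolynomial R (n + 1), ∃ v ∈ cdPolynomial R n, cVar R * u + dVar R * v = x := by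
  simp [cdPolynomial, Submodule.mem_sup, Submodule.mem_map]

lemma letterDerivation_cVar (z : FreeAlgebra R Bool) : letterDerivation z (cVar R) = z + z := by
  simp [cVar, ascentLetter, descentLetter]

lemma letterDerivation_dVar (z : FreeAlgebra R Bool) :
    letterDerivation z (dVar R) = cVar R * z + z * cVar R := by
  simp only [dVar, cVar, ascentLetter, descentLetter, map_add, letterDerivation_mul,
    letterDerivation_ι]
  noncomm_ring

namespace cdPolynomial

lemma cVar_mul_mem (hx : x ∈ cdPolynomial R n) : cVar R * x ∈ cdPolynomial R (n + 1) := by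
  cases n with
  | zero =>
    obtain ⟨r, rfl⟩ := mem_cdPolynomial_zero.mp hx
    exact mem_cdPolynomial_one.mpr ⟨r, by simp⟩
  | succ n => exact mem_cdPolynomial_add_two.mpr ⟨x, hx, 0, zero_mem _, by simp⟩

lemma dVar_mul_mem (hx : x ∈ cdPolynomial R n) : dVar R * x ∈ cdPolynomial R (n + 2) :=
  mem_cdPolynomial_add_two.mpr ⟨0, zero_mem _, x, hx, by simp⟩

lemma mul_cVar_mem (hx : x ∈ cdPolynomial R n) : x * cVar R ∈ cdPolynomial R (n + 1) := by
  induction n using Nat.twoStepInduction generalizing x with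
  | zero =>
    obtain ⟨r, rfl⟩ := mem_cdPolynomial_zero.mp hx
    simpa using cVar_mul_mem hx
  | one =>
    obtain ⟨r, rfl⟩ := mem_cdPolynomial_one.mp hx
    simpa using cVar_mul_mem hx
  | more n ih ih' =>
    obtain ⟨u, hu, v, hv, rfl⟩ := mem_cdPolynomial_add_two.mp hx
    rw [add_mul, mul_assoc, mul_assoc]
    exact add_mem (cVar_mul_mem (ih' hu)) (dVar_mul_mem (ih hv))

lemma letterDerivation_dVar_mem (hx : x ∈ cdPolynomial R n) :
    letterDerivation (dVar R) x ∈ cdPolynomial R (n + 1) := by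
  have dVar_mem : dVar R ∈ cdPolynomial R 2 := by
    simpa using dVar_mul_mem (mem_cdPolynomial_zero.mpr ⟨(1 : R), one_smul R 1⟩)
  induction n using Nat.twoStepInduction generalizing x with
  | zero =>
    obtain ⟨r, rfl⟩ := mem_cdPolynomial_zero.mp hx
    simp
  | one =>
    obtain ⟨r, rfl⟩ := mem_cdPolynomial_one.mp hx
    rw [map_smul, letterDerivation_cVar]
    exact Submodule.smul_mem _ r (add_mem dVar_mem dVar_mem)
  | more n ih ih' =>
    obtain ⟨u, hu, v, hv, rfl⟩ := mem_cdPolynomial_add_two.mp hx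
    simp only [map_add, letterDerivation_mul, letterDerivation_cVar, letterDerivation_dVar,
      add_mul, mul_assoc]
    exact add_mem
      (add_mem (add_mem (dVar_mul_mem hu) (dVar_mul_mem hu)) (cVar_mul_mem (ih' hu)))
      (add_mem (add_mem (cVar_mul_mem (dVar_mul_mem hv)) (dVar_mul_mem (cVar_mul_mem hv)))
        (dVar_mul_mem (ih hv)))

end cdPolynomial

theorem abIndex_mem_cdPolynomial [Invertible (2 : R)] (n : ℕ) :
    abIndex R n ∈ cdPolynomial R n := by
  induction n with
  | zero => exact mem_cdPolynomial_zero.mpr ⟨1, by simp [abIndex]⟩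
  | succ n ih =>
    have two_mul_mem : (2 : R) • abIndex R (n + 1) ∈ cdPolynomial R (n + 1) := by
      rw [ofNat_smul_eq_nsmul, nsmul_eq_mul, Nat.cast_ofNat, two_mul_abIndex_succ]
      exact add_mem (add_mem (cdPolynomial.cVar_mul_mem ih) (cdPolynomial.mul_cVar_mem ih))
        (cdPolynomial.letterDerivation_dVar_mem ih)
    simpa using Submodule.smul_mem _ (⅟2 : R) two_mul_mem

end CDPolynomial

section Evaluation

variable {R : Type*}

/-- The evaluation of `ab`-polynomials that replaces each word by the product over its letters of
`1` for `a` and of the weight of the position for `b`, where position `s` is that of the first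
letter. -/
def abEval [CommSemiring R] (w : ℕ → R) : FreeAlgebra R Bool →ₗ[R] (ℕ → R) :=
  LinearMap.applyₗ (1 : ℕ → R) ∘ₗ (lift R fun isDescent : Bool =>
    LinearMap.mulLeft R (if isDescent then w else 1) ∘ₗ
      LinearMap.funLeft R R Nat.succ).toLinearMap

section CommSemiring

variable [CommSemiring R] (w : ℕ → R) (x : FreeAlgebra R Bool) (s : ℕ)

@[simp]
lemma abEval_one : abEval w 1 s = 1 := by
  simp [abEval]

lemma abEval_ascentLetter_mul : abEval w (ascentLetter R * x) s = abEval w x (s + 1) := by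
  simp [abEval, ascentLetter, LinearMap.funLeft]

lemma abEval_descentLetter_mul :
    abEval w (descentLetter R * x) s = w s * abEval w x (s + 1) := by
  simp [abEval, descentLetter, LinearMap.funLeft]

lemma abEval_stepLetter_mul {α : Type*} [LinearOrder α] (a b : α) :
    abEval w (stepLetter R a b * x) s = (if b < a then w s else 1) * abEval w x (s + 1) := by
  unfold stepLetter
  split_ifs
  · rw [abEval_descentLetter_mul]
  · rw [abEval_ascentLetter_mul, one_mul]

lemma abEval_cVar_mul : abEval w (cVar R * x) s = (1 + w s) * abEval w x (s + 1) := by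
  simp [cVar, add_mul, abEval_ascentLetter_mul, abEval_descentLetter_mul]

lemma abEval_cVar : abEval w (cVar R) s = 1 + w s := by
  simpa using abEval_cVar_mul w 1 s

lemma abEval_dVar_mul :
    abEval w (dVar R * x) s = (w s + w (s + 1)) * abEval w x (s + 2) := by
  simp only [dVar, add_mul, mul_assoc, map_add, Pi.add_apply, abEval_ascentLetter_mul,
    abEval_descentLetter_mul]
  rw [add_comm]

lemma abEval_descentWord {α : Type*} [LinearOrder α] {n : ℕ} (f : Fin (n + 1) → α) :
    abEval w (descentWord R f) s =
      ∏ i : Fin n, if f i.succ < f i.castSucc then w (s + i) else 1 := by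
  induction n generalizing s with
  | zero => simp
  | succ n ih =>
    obtain ⟨x, g, rfl⟩ := Fin.exists_cons f
    rw [descentWord_cons, abEval_stepLetter_mul, ih, Fin.prod_univ_succ]
    simp [← Fin.succ_castSucc, add_assoc, add_comm 1, -Fin.castSucc_succ]

lemma prod_descentSet {n : ℕ} (π : Equiv.Perm (Fin (n + 1))) :
    ∏ i ∈ descentSet π, w i = ∏ i : Fin n, if π i.succ < π i.castSucc then w i else 1 := by
  rw [descentSet, prod_filter, prod_range_succ, prod_range]
  simp [Fin.succ, Fin.castSucc, Fin.castAdd, Fin.castLE]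

lemma abEval_abIndex (n : ℕ) :
    abEval w (abIndex R n) 0 = ∑ π : Equiv.Perm (Fin (n + 1)), ∏ i ∈ descentSet π, w i := by
  simp [abIndex, abEval_descentWord, prod_descentSet]

end CommSemiring

/-- Weights under which every occurrence of `d` evaluates to `y * t` and every product of two
consecutive occurrences of `c` to `(1 + y) * t`. -/
def IsCDWeight [CommRing R] (y t : R) (w : ℕ → R) : Prop :=
  ∀ i, w i + w (i + 1) = y * t ∧ 1 + w i * w (i + 1) = t

lemma IsCDWeight.add_two [CommRing R] {y t : R} {w : ℕ → R} (hw : IsCDWeight y t w) (i : ℕ) :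
    w (i + 2) = w i := by
  linear_combination (hw (i + 1)).1 - (hw i).1

lemma abEval_cdPolynomial [CommRing R] {y t : R} {w w₀ : ℕ → R} (hw : IsCDWeight y t w)
    (hw₀ : IsCDWeight y 1 w₀) (w₀_zero : w₀ 0 = 0) {n : ℕ} {x : FreeAlgebra R Bool}
    (hx : x ∈ cdPolynomial R n) (s : ℕ) :
    abEval w x s = (1 + w s) ^ (n % 2) * t ^ (n / 2) * abEval w₀ x 0 := by
  have w₀_one : w₀ 1 = y := by simpa [w₀_zero] using (hw₀ 0).1
  induction n using Nat.twoStepInduction generalizing t w x s with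
  | zero =>
    obtain ⟨r, rfl⟩ := mem_cdPolynomial_zero.mp hx
    simp
  | one =>
    obtain ⟨r, rfl⟩ := mem_cdPolynomial_one.mp hx
    simp [abEval_cVar, w₀_zero, mul_comm]
  | more n ih ih' =>
    obtain ⟨u, hu, v, hv, rfl⟩ := mem_cdPolynomial_add_two.mp hx
    simp only [map_add, Pi.add_apply, abEval_cVar_mul, abEval_dVar_mul, ih' hw hu, ih hw hv,
      ih' hw₀ hu (0 + 1), ih hw₀ hv (0 + 2), hw.add_two, hw₀.add_two, one_pow, mul_one, zero_add,
      w₀_zero, w₀_one]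
    obtain ⟨m, rfl | rfl⟩ := n.even_or_odd'
    · rw [show (2 * m + 1) % 2 = 1 by omega, show (2 * m + 1) / 2 = m by omega,
        show (2 * m) % 2 = 0 by omega, show 2 * m / 2 = m by omega,
        show (2 * m + 2) % 2 = 0 by omega, show (2 * m + 2) / 2 = m + 1 by omega]
      linear_combination abEval w₀ u 0 * t ^ m * ((hw s).1 + (hw s).2) +
        abEval w₀ v 0 * t ^ m * (hw s).1
    · rw [show (2 * m + 1 + 1) % 2 = 0 by omega, show (2 * m + 1 + 1) / 2 = m + 1 by omega,
        show (2 * m + 1) % 2 = 1 by omega, show (2 * m + 1) / 2 = m by omega,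
        show (2 * m + 1 + 2) % 2 = 1 by omega, show (2 * m + 1 + 2) / 2 = m + 1 by omega]
      linear_combination abEval w₀ v 0 * (1 + w s) * t ^ m * (hw s).1

end Evaluation

end CDIndex

section RefinedEulerian

/-- The weights `p` at even indices and `q` at odd indices, that is, at odd and at even (1-based)
positions respectively. -/
def parityWeight {R : Type*} (p q : R) (i : ℕ) : R := if Even i then p else q

lemma isCDWeight_parityWeight {R : Type*} [CommRing R] {p q y t : R} (hsum : p + q = y * t)
    (hprod : 1 + p * q = t) : IsCDWeight y t (parityWeight p q) := by
  intro i
  by_cases hi : Even i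
  · simp [parityWeight, hi, Nat.even_add_one, hsum, hprod]
  · simp [parityWeight, hi, Nat.even_add_one, add_comm q, mul_comm q, hsum, hprod]

lemma prod_parityWeight {R : Type*} [CommMonoid R] (p q : R) {n : ℕ} (π : Equiv.Perm (Fin n)) :
    ∏ i ∈ descentSet π, parityWeight p q i = p ^ odes π * q ^ edes π := by
  simp only [parityWeight, prod_ite, prod_const, Nat.not_even_iff_odd, odes, edes]

lemma refinedEulerian_succ (n : ℕ) (p q : ℝ) :
    refinedEulerian (n + 1) p q = abEval (parityWeight p q) (abIndex ℝ n) 0 := by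
  simp only [refinedEulerian, abEval_abIndex, prod_parityWeight]

theorem refinedEulerian_two_mul_add_two (n : ℕ) {p q y : ℝ} (hy : p + q = y * (1 + p * q)) :
    refinedEulerian (2 * n + 2) p q =
      (1 + p) * (1 + p * q) ^ n * refinedEulerian (2 * n + 2) 0 y := by
  have eval_cd := abEval_cdPolynomial (isCDWeight_parityWeight hy rfl)
    (isCDWeight_parityWeight (p := 0) (q := y) (by ring) (by ring)) rfl
    (abIndex_mem_cdPolynomial (2 * n + 1)) 0
  rw [show (2 * n + 1) % 2 = 1 by omega, show (2 * n + 1) / 2 = n by omega] at eval_cd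
  simpa [refinedEulerian_succ, parityWeight] using eval_cd

lemma edes_le {n : ℕ} (π : Equiv.Perm (Fin n)) : edes π ≤ (n - 1) / 2 := by
  have odd_descents_subset :
      {i ∈ descentSet π | Odd i} ⊆ (range ((n - 1) / 2)).image (2 * · + 1) := by
    intro i hi
    simp only [descentSet, mem_filter, mem_range] at hi
    obtain ⟨⟨_, hlt, _⟩, k, rfl⟩ := hi
    exact mem_image.mpr ⟨k, mem_range.mpr (by omega), rfl⟩
  exact (card_le_card odd_descents_subset).trans (card_image_le.trans (card_range _).le)

lemma aNum_eq_zero_of_lt {n k : ℕ} (h : (n - 1) / 2 < k) : aNum n k = 0 := by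
  rw [aNum, card_eq_zero, filter_eq_empty_iff]
  exact fun π _ hπ => (edes_le π).not_gt (hπ.1 ▸ h)

lemma refinedEulerian_zero_left (n : ℕ) (y : ℝ) :
    refinedEulerian n 0 y = ∑ j ∈ range ((n - 1) / 2 + 1), aNum n j * y ^ j := by
  have edes_mem (π : Equiv.Perm (Fin n)) : edes π ∈ range ((n - 1) / 2 + 1) :=
    mem_range.mpr (Nat.lt_succ_of_le (edes_le π))
  rw [refinedEulerian, ← sum_fiberwise_of_maps_to fun π _ => edes_mem π]
  refine sum_congr rfl fun j _ => ?_
  rw [aNum, ← filter_filter, card_filter, Nat.cast_sum, sum_mul]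
  refine sum_congr rfl fun π hπ => ?_
  rw [(mem_filter.mp hπ).2, zero_pow_eq, Nat.cast_ite, Nat.cast_one, Nat.cast_zero]

theorem refinedEulerian_eq_sum (n : ℕ) {p q : ℝ} (h : 1 + p * q ≠ 0) :
    refinedEulerian (2 * n + 2) p q =
      (1 + p) * ∑ j ∈ range (n + 1),
        aNum (2 * n + 2) j * (p + q) ^ j * (1 + p * q) ^ (n - j) := by
  rw [refinedEulerian_two_mul_add_two n (div_mul_cancel₀ (p + q) h).symm,
    refinedEulerian_zero_left, show (2 * n + 2 - 1) / 2 = n by omega, mul_assoc, mul_sum]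
  congr 1
  refine sum_congr rfl fun j hj => ?_
  rw [← pow_sub_mul_pow (1 + p * q) (mem_range_succ_iff.mp hj), div_pow]
  field_simp

end RefinedEulerian

section EulerianNumber

open Polynomial

lemma odes_add_edes {n : ℕ} (π : Equiv.Perm (Fin n)) : odes π + edes π = des π := by
  simp only [odes, edes, des, ← Nat.not_even_iff_odd, card_filter_add_card_filter_not]

lemma eval_eulerianPolynomial (n : ℕ) (q : ℝ) :
    (eulerianPolynomial n).eval q = refinedEulerian n q q := by
  simp [eulerianPolynomial, refinedEulerian, eval_finsetSum, ← pow_add, odes_add_edes]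

lemma coeff_eulerianPolynomial (n k : ℕ) :
    (eulerianPolynomial n).coeff k = eulerianNumber n k := by
  simp [eulerianPolynomial, eulerianNumber, coeff_X_pow, eq_comm]

theorem eulerianPolynomial_even_eq_sum (n : ℕ) :
    eulerianPolynomial (2 * n + 2) =
      (1 + X) * ∑ j ∈ range (n + 1),
        (aNum (2 * n + 2) j : ℝ[X]) * (2 * X) ^ j * (1 + X ^ 2) ^ (n - j) := by
  refine Polynomial.funext fun q => ?_
  have one_add_sq_pos : 0 < 1 + q * q := add_pos_of_pos_of_nonneg one_pos (mul_self_nonneg q)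
  rw [eval_eulerianPolynomial, refinedEulerian_eq_sum n one_add_sq_pos.ne']
  simp [eval_finsetSum, two_mul, sq]

lemma coeff_one_add_X_sq_pow {R : Type*} [CommSemiring R] (n r : ℕ) :
    ((1 + X ^ 2 : R[X]) ^ n).coeff r = if Even r then (n.choose (r / 2) : R) else 0 := by
  have expand_eq : (1 + X ^ 2 : R[X]) ^ n = expand R 2 ((1 + X) ^ n) := by simp
  rw [expand_eq, coeff_expand two_pos, coeff_one_add_X_pow]
  simp only [even_iff_two_dvd]

lemma coeff_one_add_X_mul_one_add_X_sq_pow {R : Type*} [CommSemiring R] (n r : ℕ) :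
    ((1 + X) * (1 + X ^ 2) ^ n : R[X]).coeff r = n.choose (r / 2) := by
  rw [add_mul, one_mul, coeff_add, coeff_one_add_X_sq_pow]
  cases r with
  | zero => simp
  | succ r =>
    rw [coeff_X_mul, coeff_one_add_X_sq_pow]
    by_cases hr : Even r
    · have half_succ : (r + 1) / 2 = r / 2 := by grind
      simp [hr, Nat.even_add_one, half_succ]
    · simp [hr, Nat.even_add_one]

theorem eulerianNumber_even_eq_sum (n k : ℕ) :
    eulerianNumber (2 * n + 2) k =
      ∑ j ∈ range (k + 1), (n - j).choose ((k - j) / 2) * 2 ^ j * aNum (2 * n + 2) j := by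
  have coeff_term (j : ℕ) :
      ((1 + X) * ((aNum (2 * n + 2) j : ℝ[X]) * (2 * X) ^ j * (1 + X ^ 2) ^ (n - j))).coeff k =
        if j ≤ k then
          (((n - j).choose ((k - j) / 2) * 2 ^ j * aNum (2 * n + 2) j : ℕ) : ℝ) else 0 := by
    have rearrange :
        (1 + X) * ((aNum (2 * n + 2) j : ℝ[X]) * (2 * X) ^ j * (1 + X ^ 2) ^ (n - j)) =
        C (2 ^ j * aNum (2 * n + 2) j : ℝ) * (((1 + X) * (1 + X ^ 2) ^ (n - j)) * X ^ j) := by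
      simp only [map_mul, map_pow, map_natCast, C_ofNat]
      ring
    rw [rearrange, coeff_C_mul, coeff_mul_X_pow', coeff_one_add_X_mul_one_add_X_sq_pow]
    split_ifs <;> push_cast <;> ring
  rw [← Nat.cast_inj (R := ℝ), ← coeff_eulerianPolynomial, eulerianPolynomial_even_eq_sum, mul_sum,
    finsetSum_coeff, sum_congr rfl fun j _ => coeff_term j, ← sum_filter, Nat.cast_sum]
  refine sum_subset (fun j hj => by grind) fun j hj hj' => ?_
  have n_lt_j : n < j := by grind
  rw [aNum_eq_zero_of_lt (by omega), mul_zero, Nat.cast_zero]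

end EulerianNumber

theorem eulerianNumber_even_expansion_general (n k : ℕ) :
    eulerianNumber (2 * n + 2) k =
      ∑ ij ∈ (range (k + 1) ×ˢ range (k + 1)).filter
          (fun ij => (2 * ij.1 + ij.2 : ℤ) = (k : ℤ) ∨ (2 * ij.1 + ij.2 : ℤ) = (k : ℤ) - 1),
        (n - ij.2).choose ij.1 * 2 ^ ij.2 * aNum (2 * n + 2) ij.2 := by
  rw [eulerianNumber_even_eq_sum]
  refine sum_nbij' (fun j => ((k - j) / 2, j)) Prod.snd ?_ ?_ ?_ ?_ ?_
  · intro j hj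
    simp only [mem_range, mem_filter, mem_product] at hj ⊢
    omega
  · intro ij hij
    exact (mem_product.mp (mem_filter.mp hij).1).2
  · exact fun j _ => rfl
  · rintro ⟨i, j⟩ hij
    simp only [mem_range, mem_filter, mem_product] at hij
    exact Prod.ext (by dsimp only; omega) rfl
  · exact fun j _ => rfl

/-- A_{2n+2,k} = Σ_{2i+j = k or k-1} C(n-j, i) 2^j a_{2n+2,j}. -/
theorem eulerianNumber_even_expansion (n k : ℕ) (h : k ≤ n) :
    eulerianNumber (2 * n + 2) k =
      ∑ ij ∈ (Finset.range (k + 1) ×ˢ Finset.range (k + 1)).filter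
          (fun ij => (2 * ij.1 + ij.2 : ℤ) = (k : ℤ) ∨ (2 * ij.1 + ij.2 : ℤ) = (k : ℤ) - 1),
        (n - ij.2).choose ij.1 * 2 ^ ij.2 * aNum (2 * n + 2) ij.2 := by
  exact eulerianNumber_even_expansion_general n k
end
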